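/- arXiv:1203.5979 — 5 statements merged into one kernel-verified Lean document; each statement's English description precedes it below -/
import Mathlib

section
/- Let u solve the Goursat problem and u⁰ solve the basic problem, and set z = u − u⁰. Then for all i ∈ {1,…,N₁} and j ∈ {1,…,N₂}: ‖z‖_{i,j} ≤ ‖z‖_{i−1,j}·(1 + h₁h₂R′_{i,j}) + h₁R_{i,j}·h₂·Σ_{s=1}^{j−1} [(2N_{i,s} + L_{i,s})‖z‖_{i,s} + h(N_{i,s} + L_{i,s})A] + h₁h₂R_{i,j}(L_{i,j} + N_{i,j})‖z‖_{i,j−1} + h₁h₂·h·R_{i,j}(N_{i,j} + L_{i,j})A, where ‖z‖_{0,j} = ‖z‖_{i,0} = 0. -/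
open Set

noncomputable section

/-- The closed domain `D̄ = [0,X] × [0,Y]`. -/
def clD (X Y : ℝ) : Set (ℝ × ℝ) := Icc 0 X ×ˢ Icc 0 Y

/-- The open domain `D = (0,X) × (0,Y)`. -/
def opD (X Y : ℝ) : Set (ℝ × ℝ) := Ioo 0 X ×ˢ Ioo 0 Y

/-- Partial derivative in the first variable. -/
def pdx (u : ℝ × ℝ → ℝ) (p : ℝ × ℝ) : ℝ := deriv (fun t => u (t, p.2)) p.1

/-- Partial derivative in the second variable. -/
def pdy (u : ℝ × ℝ → ℝ) (p : ℝ × ℝ) : ℝ := deriv (fun t => u (p.1, t)) p.2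

/-- Mixed partial derivative `∂²u/∂x∂y` (derivative in `y` of the derivative in `x`). -/
def pdxy (u : ℝ × ℝ → ℝ) (p : ℝ × ℝ) : ℝ := pdy (pdx u) p

/-- The open mesh cell `P_{i,j} = (x_{i-1}, x_i) × (y_{j-1}, y_j)`, where
`x_i = i·(X/N₁)`, `y_j = j·(Y/N₂)`. -/
def cellOp (X Y : ℝ) (N₁ N₂ : ℕ) (i j : ℕ) : Set (ℝ × ℝ) :=
  Ioo (((i : ℝ) - 1) * (X / N₁)) ((i : ℝ) * (X / N₁)) ×ˢ
    Ioo (((j : ℝ) - 1) * (Y / N₂)) ((j : ℝ) * (Y / N₂))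

/-- The closed mesh cell `P̄_{i,j} = [x_{i-1}, x_i] × [y_{j-1}, y_j]`. -/
def cellCl (X Y : ℝ) (N₁ N₂ : ℕ) (i j : ℕ) : Set (ℝ × ℝ) :=
  Icc (((i : ℝ) - 1) * (X / N₁)) ((i : ℝ) * (X / N₁)) ×ˢ
    Icc (((j : ℝ) - 1) * (Y / N₂)) ((j : ℝ) * (Y / N₂))

/-- The lower-left corner `(x_{i-1}, y_{j-1})` of the cell `P_{i,j}`. -/
def meshNode (X Y : ℝ) (N₁ N₂ : ℕ) (i j : ℕ) : ℝ × ℝ :=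
  (((i : ℝ) - 1) * (X / N₁), ((j : ℝ) - 1) * (Y / N₂))

/-- `h = √(h₁² + h₂²)`, with `h₁ = X/N₁`, `h₂ = Y/N₂`. -/
def meshH (X Y : ℝ) (N₁ N₂ : ℕ) : ℝ := Real.sqrt ((X / N₁) ^ 2 + (Y / N₂) ^ 2)

/-- The confluent hypergeometric function
`₀F₁(b; w) = Σ_{n=0}^∞ wⁿ / ((b)ₙ · n!)`, where `(b)ₙ = b(b+1)⋯(b+n−1)`. -/
def hyp0F1 (b w : ℝ) : ℝ :=
  ∑' n : ℕ, w ^ n / ((∏ m ∈ Finset.range n, (b + (m : ℝ))) * (n.factorial : ℝ))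

/-- `u` solves the Goursat problem `∂²u/∂x∂y + N(u)·u = f` on `D`,
`u(x,0) = ψ(x)`, `u(0,y) = φ(y)`, with the regularity stated in the paper. -/
structure GoursatSol (X Y : ℝ) (N : ℝ → ℝ) (f : ℝ × ℝ → ℝ) (ψ φ : ℝ → ℝ)
    (u : ℝ × ℝ → ℝ) : Prop where
  cont : ContinuousOn u (clD X Y)
  diffx : ∀ p ∈ opD X Y, DifferentiableAt ℝ (fun t => u (t, p.2)) p.1
  diffy : ∀ p ∈ opD X Y, DifferentiableAt ℝ (fun t => u (p.1, t)) p.2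
  diffxy : ∀ p ∈ opD X Y, DifferentiableAt ℝ (fun t => pdx u (p.1, t)) p.2
  contx : ContinuousOn (pdx u) (opD X Y)
  conty : ContinuousOn (pdy u) (opD X Y)
  contxy : ContinuousOn (pdxy u) (opD X Y)
  eqn : ∀ p ∈ opD X Y, pdxy u p + N (u p) * u p = f p
  bc1 : ∀ x ∈ Icc (0 : ℝ) X, u (x, 0) = ψ x
  bc2 : ∀ y ∈ Icc (0 : ℝ) Y, u (0, y) = φ y

/-- `u0` solves the basic problem: the Goursat problem with the nonlinear coefficient
frozen, on each open mesh cell `P_{i,j}`, at the value of the unknown at the lower-left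
corner of that cell. -/
structure BasicSol (X Y : ℝ) (N : ℝ → ℝ) (f : ℝ × ℝ → ℝ) (ψ φ : ℝ → ℝ)
    (N₁ N₂ : ℕ) (u0 : ℝ × ℝ → ℝ) : Prop where
  cont : ContinuousOn u0 (clD X Y)
  diffx : ∀ i ∈ Finset.Icc 1 N₁, ∀ j ∈ Finset.Icc 1 N₂, ∀ p ∈ cellOp X Y N₁ N₂ i j,
      DifferentiableAt ℝ (fun t => u0 (t, p.2)) p.1
  diffy : ∀ i ∈ Finset.Icc 1 N₁, ∀ j ∈ Finset.Icc 1 N₂, ∀ p ∈ cellOp X Y N₁ N₂ i j,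
      DifferentiableAt ℝ (fun t => u0 (p.1, t)) p.2
  diffxy : ∀ i ∈ Finset.Icc 1 N₁, ∀ j ∈ Finset.Icc 1 N₂, ∀ p ∈ cellOp X Y N₁ N₂ i j,
      DifferentiableAt ℝ (fun t => pdx u0 (p.1, t)) p.2
  contx : ∀ i ∈ Finset.Icc 1 N₁, ∀ j ∈ Finset.Icc 1 N₂,
      ContinuousOn (pdx u0) (cellOp X Y N₁ N₂ i j)
  conty : ∀ i ∈ Finset.Icc 1 N₁, ∀ j ∈ Finset.Icc 1 N₂,
      ContinuousOn (pdy u0) (cellOp X Y N₁ N₂ i j)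
  contxy : ∀ i ∈ Finset.Icc 1 N₁, ∀ j ∈ Finset.Icc 1 N₂,
      ContinuousOn (pdxy u0) (cellOp X Y N₁ N₂ i j)
  eqn : ∀ i ∈ Finset.Icc 1 N₁, ∀ j ∈ Finset.Icc 1 N₂, ∀ p ∈ cellOp X Y N₁ N₂ i j,
      pdxy u0 p + N (u0 (meshNode X Y N₁ N₂ i j)) * u0 p = f p
  bc1 : ∀ x ∈ Icc (0 : ℝ) X, u0 (x, 0) = ψ x
  bc2 : ∀ y ∈ Icc (0 : ℝ) Y, u0 (0, y) = φ y

/-- `‖z‖_{i,j} = sup_{P̄_{i,j}} |z|`, with the convention `‖z‖_{0,j} = ‖z‖_{i,0} = 0`. -/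
def znorm (X Y : ℝ) (N₁ N₂ : ℕ) (z : ℝ × ℝ → ℝ) (i j : ℕ) : ℝ :=
  if i = 0 ∨ j = 0 then 0 else ⨆ p ∈ cellCl X Y N₁ N₂ i j, |z p|

/-- `N_{i,j} = |N(u⁰(x_{i−1}, y_{j−1}))|`. -/
def coefN (X Y : ℝ) (N₁ N₂ : ℕ) (N : ℝ → ℝ) (u0 : ℝ × ℝ → ℝ) (i j : ℕ) : ℝ :=
  |N (u0 (meshNode X Y N₁ N₂ i j))|

/-- `L_{i,j} = sup_{(x,y) ∈ P̄_{i,j}, θ ∈ [0,1]} |𝓝′(u⁰_{i,j} − θ(u⁰_{i,j} − u(x,y)))|`,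
where `𝓝(v) = N(v)·v`. -/
def coefL (X Y : ℝ) (N₁ N₂ : ℕ) (N : ℝ → ℝ) (u u0 : ℝ × ℝ → ℝ) (i j : ℕ) : ℝ :=
  ⨆ p ∈ cellCl X Y N₁ N₂ i j, ⨆ θ ∈ Icc (0 : ℝ) 1,
    |deriv (fun v => N v * v)
      (u0 (meshNode X Y N₁ N₂ i j) - θ * (u0 (meshNode X Y N₁ N₂ i j) - u p))|

/-- `R_{i,j} = ₀F₁(1; N_{i,j}·h₁·h₂)`. -/
def coefR (X Y : ℝ) (N₁ N₂ : ℕ) (N : ℝ → ℝ) (u0 : ℝ × ℝ → ℝ) (i j : ℕ) : ℝ :=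
  hyp0F1 1 (coefN X Y N₁ N₂ N u0 i j * (X / N₁) * (Y / N₂))

/-- `R′_{i,j} = ₀F₁(2; N_{i,j}·h₁·h₂)·N_{i,j}`. -/
def coefR' (X Y : ℝ) (N₁ N₂ : ℕ) (N : ℝ → ℝ) (u0 : ℝ × ℝ → ℝ) (i j : ℕ) : ℝ :=
  hyp0F1 2 (coefN X Y N₁ N₂ N u0 i j * (X / N₁) * (Y / N₂)) * coefN X Y N₁ N₂ N u0 i j

/-- The constant
`A = √([sup|ψ′| + Y(sup|f| + N_α·sup|u|)]² + [sup|φ′| + X(sup|f| + N_α·sup|u|)]²)`,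
where `N_α = sup_{D̄} |N(u)|`. -/
def constA (X Y : ℝ) (N : ℝ → ℝ) (f : ℝ × ℝ → ℝ) (ψ φ : ℝ → ℝ) (u : ℝ × ℝ → ℝ) : ℝ :=
  Real.sqrt
    (((⨆ x ∈ Ioo (0 : ℝ) X, |deriv ψ x|) +
        Y * ((⨆ p ∈ clD X Y, |f p|) + (⨆ p ∈ clD X Y, |N (u p)|) * ⨆ p ∈ clD X Y, |u p|)) ^ 2 +
      ((⨆ y ∈ Ioo (0 : ℝ) Y, |deriv φ y|) +
        X * ((⨆ p ∈ clD X Y, |f p|) + (⨆ p ∈ clD X Y, |N (u p)|) * ⨆ p ∈ clD X Y, |u p|)) ^ 2)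


lemma bisup_le_aux {α : Type*} {S : Set α} {F : α → ℝ} {B : ℝ} (hB0 : 0 ≤ B)
    (hB : ∀ p ∈ S, F p ≤ B) : (⨆ p ∈ S, F p) ≤ B := by
  refine Real.iSup_le (fun p => Real.iSup_le (fun hp => hB p hp) hB0) hB0

lemma le_bisup_aux {α : Type*} {S : Set α} {F : α → ℝ} {B : ℝ}
    (hB : ∀ p ∈ S, F p ≤ B) {p : α} (hp : p ∈ S) : F p ≤ ⨆ p ∈ S, F p := by
  have hbdd : BddAbove (range fun p => ⨆ (_ : p ∈ S), F p) := by
    refine ⟨max B 0, ?_⟩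
    rintro _ ⟨q, rfl⟩
    exact Real.iSup_le (fun hq => (hB q hq).trans (le_max_left _ _)) (le_max_right _ _)
  have h := le_ciSup hbdd p
  simpa [hp] using h

lemma bisup_nonneg_aux {α : Type*} {S : Set α} {F : α → ℝ} (h : ∀ p, 0 ≤ F p) :
    0 ≤ ⨆ p ∈ S, F p :=
  Real.iSup_nonneg fun p => Real.iSup_nonneg fun _ => h p

lemma rect_nonneg (w wx wxy : ℝ → ℝ → ℝ) {a b c d : ℝ} (hab : a ≤ b) (hcd : c ≤ d)
    (hc : ContinuousOn (fun p : ℝ × ℝ => w p.1 p.2) (Icc a b ×ˢ Icc c d))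
    (hx : ∀ s ∈ Ioo a b, ∀ t ∈ Ioo c d, HasDerivAt (fun s => w s t) (wx s t) s)
    (hxy : ∀ s ∈ Ioo a b, ∀ t ∈ Ioo c d, HasDerivAt (fun t => wx s t) (wxy s t) t)
    (hpos : ∀ s ∈ Ioo a b, ∀ t ∈ Ioo c d, 0 ≤ wxy s t) :
    0 ≤ w b d - w a d - w b c + w a c := by
  rcases hcd.eq_or_lt with rfl | hcd
  · linarith
  have hct : ∀ s ∈ Icc a b, ContinuousOn (fun t => w s t) (Icc c d) := by
    intro s hs
    exact hc.comp (f := fun t => (s, t)) (by fun_prop) (fun t ht => ⟨hs, ht⟩)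
  have hcs : ∀ t ∈ Icc c d, ContinuousOn (fun s => w s t) (Icc a b) := by
    intro t ht
    exact hc.comp (f := fun s => (s, t)) (by fun_prop) (fun s hs => ⟨hs, ht⟩)
  have hmx : ∀ s ∈ Ioo a b, MonotoneOn (fun t => wx s t) (Ioo c d) := by
    intro s hs
    refine monotoneOn_of_deriv_nonneg (convex_Ioo c d) ?_ ?_ ?_
    · exact fun t ht => (hxy s hs t ht).continuousAt.continuousWithinAt
    · rw [interior_Ioo]
      exact fun t ht => (hxy s hs t ht).differentiableAt.differentiableWithinAt
    · rw [interior_Ioo]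
      intro t ht
      rw [(hxy s hs t ht).deriv]
      exact hpos s hs t ht
  have hm : MonotoneOn (fun t => w b t - w a t) (Ioo c d) := by
    intro t ht t' ht' htt
    have : MonotoneOn (fun s => w s t' - w s t) (Icc a b) := by
      refine monotoneOn_of_deriv_nonneg (convex_Icc a b) ?_ ?_ ?_
      · exact (hcs t' (Ioo_subset_Icc_self ht')).sub (hcs t (Ioo_subset_Icc_self ht))
      · rw [interior_Icc]
        exact fun s hs =>
          ((hx s hs t' ht').sub (hx s hs t ht)).differentiableAt.differentiableWithinAt
      · rw [interior_Icc]
        intro s hs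
        have := ((hx s hs t' ht').sub (hx s hs t ht)).deriv
        have e : (fun s => w s t' - w s t) = ((fun s => w s t') - fun s => w s t) := rfl
        rw [e, this]
        have := hmx s hs ht ht' htt
        simp only at this
        linarith
    have := this (left_mem_Icc.2 hab) (right_mem_Icc.2 hab) hab
    simp only at this ⊢
    linarith
  have hcont : ContinuousOn (fun t => w b t - w a t) (Icc c d) :=
    (hct b (right_mem_Icc.2 hab)).sub (hct a (left_mem_Icc.2 hab))
  obtain ⟨e, he⟩ := exists_between hcd
  have hl : w b c - w a c ≤ w b e - w a e := by
    refine ContinuousWithinAt.closure_le (s := Ioo c e) (f := fun t => w b t - w a t)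
      (g := fun _ => w b e - w a e) (x := c) ?_ ?_ continuousWithinAt_const ?_
    · rw [closure_Ioo he.1.ne]; exact left_mem_Icc.2 he.1.le
    · exact (hcont c (left_mem_Icc.2 hcd.le)).mono
        (Ioo_subset_Icc_self.trans (Icc_subset_Icc_right he.2.le))
    · exact fun t ht => hm ⟨ht.1, ht.2.trans he.2⟩ he ht.2.le
  have hr : w b e - w a e ≤ w b d - w a d := by
    refine ContinuousWithinAt.closure_le (s := Ioo e d) (f := fun _ => w b e - w a e)
      (g := fun t => w b t - w a t) (x := d) ?_ continuousWithinAt_const ?_ ?_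
    · rw [closure_Ioo he.2.ne]; exact right_mem_Icc.2 he.2.le
    · exact (hcont d (right_mem_Icc.2 hcd.le)).mono
        (Ioo_subset_Icc_self.trans (Icc_subset_Icc_left he.1.le))
    · exact fun t ht => hm he ⟨he.1.trans ht.1, ht.2⟩ ht.1.le
  linarith

lemma rect_bound (w wx wxy H Hx Hxy : ℝ → ℝ → ℝ) {a b c d : ℝ} (hab : a ≤ b) (hcd : c ≤ d)
    (hc : ContinuousOn (fun p : ℝ × ℝ => w p.1 p.2) (Icc a b ×ˢ Icc c d))
    (hx : ∀ s ∈ Ioo a b, ∀ t ∈ Ioo c d, HasDerivAt (fun s => w s t) (wx s t) s)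
    (hxy : ∀ s ∈ Ioo a b, ∀ t ∈ Ioo c d, HasDerivAt (fun t => wx s t) (wxy s t) t)
    (hHc : ContinuousOn (fun p : ℝ × ℝ => H p.1 p.2) (Icc a b ×ˢ Icc c d))
    (hHx : ∀ s ∈ Ioo a b, ∀ t ∈ Ioo c d, HasDerivAt (fun s => H s t) (Hx s t) s)
    (hHxy : ∀ s ∈ Ioo a b, ∀ t ∈ Ioo c d, HasDerivAt (fun t => Hx s t) (Hxy s t) t)
    (hb : ∀ s ∈ Ioo a b, ∀ t ∈ Ioo c d, |wxy s t| ≤ Hxy s t) :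
    |w b d - w a d - w b c + w a c| ≤ H b d - H a d - H b c + H a c := by
  have h1 := rect_nonneg (fun s t => H s t - w s t) (fun s t => Hx s t - wx s t)
    (fun s t => Hxy s t - wxy s t) hab hcd (hHc.sub hc)
    (fun s hs t ht => (hHx s hs t ht).sub (hx s hs t ht))
    (fun s hs t ht => (hHxy s hs t ht).sub (hxy s hs t ht))
    (fun s hs t ht => by have := abs_le.1 (hb s hs t ht); linarith)
  have h2 := rect_nonneg (fun s t => H s t + w s t) (fun s t => Hx s t + wx s t)
    (fun s t => Hxy s t + wxy s t) hab hcd (hHc.add hc)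
    (fun s hs t ht => (hHx s hs t ht).add (hx s hs t ht))
    (fun s hs t ht => (hHxy s hs t ht).add (hxy s hs t ht))
    (fun s hs t ht => by have := abs_le.1 (hb s hs t ht); linarith)
  rw [abs_le]
  constructor <;> linarith

lemma rect_bound_const (w wx wxy : ℝ → ℝ → ℝ) {a b c d M : ℝ} (hab : a ≤ b) (hcd : c ≤ d)
    (hc : ContinuousOn (fun p : ℝ × ℝ => w p.1 p.2) (Icc a b ×ˢ Icc c d))
    (hx : ∀ s ∈ Ioo a b, ∀ t ∈ Ioo c d, HasDerivAt (fun s => w s t) (wx s t) s)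
    (hxy : ∀ s ∈ Ioo a b, ∀ t ∈ Ioo c d, HasDerivAt (fun t => wx s t) (wxy s t) t)
    (hb : ∀ s ∈ Ioo a b, ∀ t ∈ Ioo c d, |wxy s t| ≤ M) :
    |w b d - w a d - w b c + w a c| ≤ M * (b - a) * (d - c) := by
  have := rect_bound w wx wxy (fun s t => M * s * t) (fun s t => M * t) (fun s t => M) hab hcd hc
    hx hxy (by fun_prop)
    (fun s hs t ht => by
      simpa using ((hasDerivAt_id s).const_mul M).mul_const t)
    (fun s hs t ht => by
      simpa using (hasDerivAt_id t).const_mul M) hb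
  refine this.trans (le_of_eq (by ring))

lemma prod_one_aux (k : ℕ) : (∏ m ∈ Finset.range k, ((1 : ℝ) + (m : ℝ))) = (k.factorial : ℝ) := by
  induction k with
  | zero => simp
  | succ k ih => rw [Finset.prod_range_succ, ih, Nat.factorial_succ]; push_cast; ring

lemma prod_two_aux (k : ℕ) :
    (∏ m ∈ Finset.range k, ((2 : ℝ) + (m : ℝ))) = ((k + 1).factorial : ℝ) := by
  induction k with
  | zero => simp
  | succ k ih => rw [Finset.prod_range_succ, ih, Nat.factorial_succ (k + 1)]; push_cast; ring

lemma fac_one_le (k : ℕ) : (1 : ℝ) ≤ (k.factorial : ℝ) := by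
  exact_mod_cast Nat.factorial_pos k

lemma summable_one {W : ℝ} (hW : 0 ≤ W) :
    Summable (fun k : ℕ => W ^ k / ((k.factorial : ℝ) * (k.factorial : ℝ))) := by
  refine Summable.of_nonneg_of_le (fun k => by positivity) (fun k => ?_)
    (Real.summable_pow_div_factorial W)
  have := fac_one_le k
  gcongr
  nlinarith

lemma summable_two {W : ℝ} (hW : 0 ≤ W) :
    Summable (fun k : ℕ => W ^ k / (((k + 1).factorial : ℝ) * (k.factorial : ℝ))) := by
  refine Summable.of_nonneg_of_le (fun k => by positivity) (fun k => ?_)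
    (Real.summable_pow_div_factorial W)
  have := fac_one_le k
  have := fac_one_le (k + 1)
  gcongr
  nlinarith

lemma hyp_one (W : ℝ) :
    hyp0F1 1 W = ∑' k : ℕ, W ^ k / ((k.factorial : ℝ) * (k.factorial : ℝ)) := by
  simp only [hyp0F1, prod_one_aux]

lemma hyp_two (W : ℝ) :
    hyp0F1 2 W = ∑' k : ℕ, W ^ k / (((k + 1).factorial : ℝ) * (k.factorial : ℝ)) := by
  simp only [hyp0F1, prod_two_aux]

lemma hyp_one_nonneg {W : ℝ} (hW : 0 ≤ W) : 0 ≤ hyp0F1 1 W := by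
  rw [hyp_one]; exact tsum_nonneg fun k => by positivity

lemma hyp_one_le {W : ℝ} (hW : 0 ≤ W) : hyp0F1 1 W ≤ 1 + W * hyp0F1 2 W := by
  rw [hyp_one, hyp_two, (summable_one hW).tsum_eq_zero_add, ← tsum_mul_left]
  simp only [pow_zero, Nat.factorial_zero, Nat.cast_one, mul_one, div_one]
  gcongr with k
  · exact (summable_nat_add_iff 1).2 (summable_one hW)
  · exact (summable_two hW).mul_left W
  · rw [← mul_div_assoc, ← pow_succ']
    have h2 : (k.factorial : ℝ) ≤ ((k + 1).factorial : ℝ) := by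
      exact_mod_cast Nat.factorial_le (Nat.le_succ k)
    gcongr

lemma gron_step (w wx wxy : ℝ → ℝ → ℝ) {a b c d n γ α β : ℝ} 
    (hn : 0 ≤ n) (hγ : 0 ≤ γ) (hβ : 0 ≤ β)
    (hc : ContinuousOn (fun p : ℝ × ℝ => w p.1 p.2) (Icc a b ×ˢ Icc c d))
    (hx : ∀ s ∈ Ioo a b, ∀ t ∈ Ioo c d, HasDerivAt (fun s => w s t) (wx s t) s)
    (hxy : ∀ s ∈ Ioo a b, ∀ t ∈ Ioo c d, HasDerivAt (fun t => wx s t) (wxy s t) t)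
    (hb : ∀ s ∈ Ioo a b, ∀ t ∈ Ioo c d, |wxy s t| ≤ n * |w s t| + γ)
    (hα : ∀ t ∈ Icc c d, |w a t| ≤ α)
    (hβ' : ∀ s ∈ Icc a b, |w s c - w a c| ≤ β * (s - a))
    (m : ℕ) (e : ℕ → ℝ)
    (hw : ∀ s ∈ Icc a b, ∀ t ∈ Icc c d, |w s t| ≤ ∑ k ∈ Finset.range m,
      e k * ((s - a) ^ k * (t - c) ^ k) / ((k.factorial : ℝ) * (k.factorial : ℝ))) :
    ∀ s ∈ Icc a b, ∀ t ∈ Icc c d, |w s t| ≤ (α + β * (b - a) + γ * (b - a) * (d - c)) +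
      ∑ k ∈ Finset.range m, n * e k * ((s - a) ^ (k + 1) * (t - c) ^ (k + 1)) /
        (((k + 1).factorial : ℝ) * ((k + 1).factorial : ℝ)) := by
  intro s hs t ht
  have sub1 : Ioo a s ⊆ Ioo a b := Ioo_subset_Ioo_right hs.2
  have sub2 : Ioo c t ⊆ Ioo c d := Ioo_subset_Ioo_right ht.2
  have key := rect_bound w wx wxy
    (fun s t => γ * ((s - a) * (t - c)) + ∑ k ∈ Finset.range m,
      n * e k * ((s - a) ^ (k + 1) * (t - c) ^ (k + 1)) /
        (((k + 1).factorial : ℝ) * ((k + 1).factorial : ℝ)))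
    (fun s t => γ * (t - c) + ∑ k ∈ Finset.range m,
      n * e k * ((s - a) ^ k * (t - c) ^ (k + 1)) /
        ((k.factorial : ℝ) * ((k + 1).factorial : ℝ)))
    (fun s t => γ + ∑ k ∈ Finset.range m,
      n * e k * ((s - a) ^ k * (t - c) ^ k) /
        ((k.factorial : ℝ) * (k.factorial : ℝ)))
    hs.1 ht.1
    (hc.mono (prod_mono (Icc_subset_Icc_right hs.2) (Icc_subset_Icc_right ht.2)))
    (fun s hs t ht => hx s (sub1 hs) t (sub2 ht))
    (fun s hs t ht => hxy s (sub1 hs) t (sub2 ht))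
    (by fun_prop)
    (by
      intro s hs t ht
      refine HasDerivAt.add ?_ (HasDerivAt.fun_sum fun k _ => ?_)
      · simpa using (((hasDerivAt_id s).sub_const a).mul_const (t - c)).const_mul γ
      · have := (((((hasDerivAt_id s).sub_const a).pow (k + 1)).mul_const
          ((t - c) ^ (k + 1))).const_mul (n * e k)).div_const
            (((k + 1).factorial : ℝ) * ((k + 1).factorial : ℝ))
        refine this.congr_deriv ?_
        rw [Nat.factorial_succ]
        have : (k.factorial : ℝ) ≠ 0 := by positivity
        push_cast
        simp only [id]
        field_simp)
    (by
      intro s hs t ht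
      refine HasDerivAt.add ?_ (HasDerivAt.fun_sum fun k _ => ?_)
      · simpa using ((hasDerivAt_id t).sub_const c).const_mul γ
      · have := (((((hasDerivAt_id t).sub_const c).pow (k + 1)).const_mul
          ((s - a) ^ k)).const_mul (n * e k)).div_const
            ((k.factorial : ℝ) * ((k + 1).factorial : ℝ))
        refine this.congr_deriv ?_
        rw [Nat.factorial_succ]
        have : (k.factorial : ℝ) ≠ 0 := by positivity
        push_cast
        simp only [id]
        field_simp)
    (by
      intro s hs t ht
      refine (hb s (sub1 hs) t (sub2 ht)).trans ?_
      have := mul_le_mul_of_nonneg_left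
        (hw s (Ioo_subset_Icc_self (sub1 hs)) t (Ioo_subset_Icc_self (sub2 ht))) hn
      rw [Finset.mul_sum] at this
      rw [add_comm]
      refine add_le_add_right (this.trans (le_of_eq ?_)) _
      exact Finset.sum_congr rfl fun k _ => by ring)
  simp only [sub_self, zero_mul, mul_zero, ne_eq, Nat.add_eq_zero_iff, one_ne_zero, and_false,
    not_false_eq_true, zero_pow, zero_div, Finset.sum_const_zero, add_zero, sub_zero] at key
  have h1 := hα t ht
  have h2 := hβ' s hs
  have h3 : β * (s - a) ≤ β * (b - a) := by
    have := hs.2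
    gcongr
  have h4 : γ * ((s - a) * (t - c)) ≤ γ * (b - a) * (d - c) := by
    rw [mul_assoc]
    have := hs.1; have := hs.2; have := ht.1; have := ht.2
    gcongr; linarith
  have h5 : |w s t| ≤ |w a t| + |w s c - w a c| + |w s t - w a t - w s c + w a c| := by
    have e : w s t = w a t + (w s c - w a c) + (w s t - w a t - w s c + w a c) := by ring
    calc |w s t| = |w a t + (w s c - w a c) + (w s t - w a t - w s c + w a c)| := by rw [← e]
      _ ≤ _ := abs_add_three _ _ _
  linarith

lemma gron (w wx wxy : ℝ → ℝ → ℝ) {a b c d n γ α β : ℝ} (hab : a ≤ b) (hcd : c ≤ d)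
    (hn : 0 ≤ n) (hγ : 0 ≤ γ) (hβ : 0 ≤ β)
    (hc : ContinuousOn (fun p : ℝ × ℝ => w p.1 p.2) (Icc a b ×ˢ Icc c d))
    (hx : ∀ s ∈ Ioo a b, ∀ t ∈ Ioo c d, HasDerivAt (fun s => w s t) (wx s t) s)
    (hxy : ∀ s ∈ Ioo a b, ∀ t ∈ Ioo c d, HasDerivAt (fun t => wx s t) (wxy s t) t)
    (hb : ∀ s ∈ Ioo a b, ∀ t ∈ Ioo c d, |wxy s t| ≤ n * |w s t| + γ)
    (hα : ∀ t ∈ Icc c d, |w a t| ≤ α)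
    (hβ' : ∀ s ∈ Icc a b, |w s c - w a c| ≤ β * (s - a)) :
    ∀ s ∈ Icc a b, ∀ t ∈ Icc c d, |w s t| ≤
      (α + β * (b - a) + γ * (b - a) * (d - c)) * hyp0F1 1 (n * (b - a) * (d - c)) := by
  set K := α + β * (b - a) + γ * (b - a) * (d - c) with hK
  have hK0 : 0 ≤ K := by
    have h1 := (abs_nonneg _).trans (hα c (left_mem_Icc.2 hcd))
    have h2 : 0 ≤ b - a := by linarith
    have h3 : 0 ≤ d - c := by linarith
    positivity
  obtain ⟨Z, hZ⟩ := (isCompact_Icc.prod isCompact_Icc).exists_bound_of_continuousOn hc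
  have hZ' : ∀ s ∈ Icc a b, ∀ t ∈ Icc c d, |w s t| ≤ Z := fun s hs t ht => hZ (s, t) ⟨hs, ht⟩
  have hZ0 : 0 ≤ Z := (abs_nonneg _).trans (hZ' a (left_mem_Icc.2 hab) c (left_mem_Icc.2 hcd))
  have main : ∀ m : ℕ, ∀ s ∈ Icc a b, ∀ t ∈ Icc c d, |w s t| ≤ ∑ k ∈ Finset.range (m + 1),
      (if k < m then K * n ^ k else Z * n ^ m) * ((s - a) ^ k * (t - c) ^ k) /
        ((k.factorial : ℝ) * (k.factorial : ℝ)) := by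
    intro m
    induction m with
    | zero => intro s hs t ht; simpa using hZ' s hs t ht
    | succ m ih =>
      intro s hs t ht
      have := gron_step w wx wxy hn hγ hβ hc hx hxy hb hα hβ' (m + 1) _ ih s hs t ht
      rw [Finset.sum_range_succ']
      refine this.trans (le_of_eq ?_)
      rw [add_comm]
      congr 1
      · refine Finset.sum_congr rfl fun k hk => ?_
        by_cases h : k < m
        · simp only [h, if_true, Nat.add_lt_add_iff_right]; ring
        · simp only [h, if_false, Nat.add_lt_add_iff_right]; ring
      · simp [hK]
  intro s hs t ht
  set W := n * (b - a) * (d - c) with hWd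
  have e1 : 0 ≤ s - a := by linarith [hs.1]
  have e2 : 0 ≤ t - c := by linarith [ht.1]
  have e3 : s - a ≤ b - a := by linarith [hs.2]
  have e4 : t - c ≤ d - c := by linarith [ht.2]
  have e5 : 0 ≤ b - a := e1.trans e3
  have e6 : 0 ≤ d - c := e2.trans e4
  have hW : 0 ≤ W := by positivity
  have hWk : ∀ k, n ^ k * ((s - a) ^ k * (t - c) ^ k) ≤ W ^ k := by
    intro k
    rw [← mul_pow, ← mul_pow, hWd, mul_assoc]
    gcongr
  have hfin : ∀ m : ℕ, |w s t| ≤ K * hyp0F1 1 W +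
      Z * (W ^ m / ((m.factorial : ℝ) * (m.factorial : ℝ))) := by
    intro m
    refine (main m s hs t ht).trans ?_
    rw [Finset.sum_range_succ]
    refine add_le_add ?_ ?_
    · calc _ ≤ ∑ k ∈ Finset.range m, K * (W ^ k / ((k.factorial : ℝ) * (k.factorial : ℝ))) := by
            refine Finset.sum_le_sum fun k hk => ?_
            rw [if_pos (Finset.mem_range.1 hk), ← mul_div_assoc, mul_assoc]
            have := hWk k
            gcongr
        _ ≤ _ := by
            rw [← Finset.mul_sum, hyp_one]
            refine mul_le_mul_of_nonneg_left ?_ hK0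
            exact (summable_one hW).sum_le_tsum _ (fun k _ => by positivity)
    · rw [if_neg (lt_irrefl m), ← mul_div_assoc, mul_assoc]
      have := hWk m
      gcongr
  have hlim := ((summable_one hW).tendsto_atTop_zero.const_mul Z).const_add (K * hyp0F1 1 W)
  simp only [mul_zero, add_zero] at hlim
  exact ge_of_tendsto' hlim hfin

lemma entire_contDiff {ν : ℕ → ℝ} {N : ℝ → ℝ}
    (hN : ∀ v : ℝ, HasSum (fun s : ℕ => ν s * v ^ s) (N v)) : ContDiff ℝ 1 N := by
  have hrad : (FormalMultilinearSeries.ofScalars ℝ ν).radius = ⊤ := by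
    refine ENNReal.eq_top_of_forall_nnreal_le fun r => ?_
    refine FormalMultilinearSeries.le_radius_of_tendsto (l := 0) _ ?_
    have h := (hN r).summable.tendsto_atTop_zero.norm
    simpa [FormalMultilinearSeries.ofScalars_norm, abs_mul] using h
  have h : HasFPowerSeriesOnBall N (FormalMultilinearSeries.ofScalars ℝ ν) 0 ⊤ := by
    refine ⟨hrad.ge, by simp, ?_⟩
    intro y _
    have := hN y
    simpa [FormalMultilinearSeries.ofScalars_apply_eq, mul_comm] using this
  have han : AnalyticOnNhd ℝ N univ := by
    have := h.analyticOnNhd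
    rwa [Metric.eball_top] at this
  exact contDiffOn_univ.1 (han.contDiffOn uniqueDiffOn_univ)

lemma bounded_on {S : Set (ℝ × ℝ)} (hS : IsCompact S) {g : ℝ × ℝ → ℝ} (hg : ContinuousOn g S) :
    ∃ B, ∀ p ∈ S, |g p| ≤ B := hS.exists_bound_of_continuousOn hg

lemma le_bisup_cont {S : Set (ℝ × ℝ)} (hS : IsCompact S) {g : ℝ × ℝ → ℝ} (hg : ContinuousOn g S)
    {p : ℝ × ℝ} (hp : p ∈ S) : |g p| ≤ ⨆ p ∈ S, |g p| := by
  obtain ⟨B, hB⟩ := bounded_on hS hg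
  exact le_bisup_aux (F := fun p => |g p|) hB hp

lemma coefL_nonneg (X Y : ℝ) (N₁ N₂ : ℕ) (N : ℝ → ℝ) (u u0 : ℝ × ℝ → ℝ) (i j : ℕ) :
    0 ≤ coefL X Y N₁ N₂ N u u0 i j :=
  bisup_nonneg_aux fun _ => bisup_nonneg_aux fun _ => abs_nonneg _

lemma znorm_nonneg (X Y : ℝ) (N₁ N₂ : ℕ) (z : ℝ × ℝ → ℝ) (i j : ℕ) :
    0 ≤ znorm X Y N₁ N₂ z i j := by
  unfold znorm
  split_ifs
  · exact le_rfl
  · exact bisup_nonneg_aux fun p => abs_nonneg _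

lemma cellCl_compact (X Y : ℝ) (N₁ N₂ i j : ℕ) : IsCompact (cellCl X Y N₁ N₂ i j) :=
  isCompact_Icc.prod isCompact_Icc

lemma coefL_bound {X Y : ℝ} {N₁ N₂ : ℕ} {N : ℝ → ℝ} (hN : ContDiff ℝ 1 N) {u u0 : ℝ × ℝ → ℝ}
    {i j : ℕ} (hu : ContinuousOn u (cellCl X Y N₁ N₂ i j)) {p : ℝ × ℝ}
    (hp : p ∈ cellCl X Y N₁ N₂ i j) :
    |N (u0 (meshNode X Y N₁ N₂ i j)) * u0 (meshNode X Y N₁ N₂ i j) - N (u p) * u p| ≤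
      coefL X Y N₁ N₂ N u u0 i j * |u p - u0 (meshNode X Y N₁ N₂ i j)| := by
  set c := u0 (meshNode X Y N₁ N₂ i j) with hc
  have hG : ContDiff ℝ 1 (fun v => N v * v) := hN.mul contDiff_id
  have hG' : Continuous (deriv fun v => N v * v) := hG.continuous_deriv le_rfl
  have hcomp : IsCompact (cellCl X Y N₁ N₂ i j ×ˢ Icc (0 : ℝ) 1) :=
    (cellCl_compact X Y N₁ N₂ i j).prod isCompact_Icc
  have hcont : ContinuousOn (fun q : (ℝ × ℝ) × ℝ =>
      deriv (fun v => N v * v) (c - q.2 * (c - u q.1)))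
      (cellCl X Y N₁ N₂ i j ×ˢ Icc (0 : ℝ) 1) := by
    refine hG'.comp_continuousOn ?_
    have : ContinuousOn (fun q : (ℝ × ℝ) × ℝ => u q.1) (cellCl X Y N₁ N₂ i j ×ˢ Icc (0 : ℝ) 1) :=
      hu.comp continuousOn_fst fun q hq => hq.1
    exact continuousOn_const.sub (continuousOn_snd.mul (continuousOn_const.sub this))
  obtain ⟨B, hB⟩ := hcomp.exists_bound_of_continuousOn hcont
  have hB' : ∀ p ∈ cellCl X Y N₁ N₂ i j, ∀ θ ∈ Icc (0 : ℝ) 1,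
      |deriv (fun v => N v * v) (c - θ * (c - u p))| ≤ B := fun p hp θ hθ => hB (p, θ) ⟨hp, hθ⟩
  have hB0 : 0 ≤ B := (abs_nonneg _).trans (hB' p hp 0 (by simp))
  have hL : ∀ θ ∈ Icc (0 : ℝ) 1, |deriv (fun v => N v * v) (c - θ * (c - u p))| ≤
      coefL X Y N₁ N₂ N u u0 i j := by
    intro θ hθ
    refine (le_bisup_aux (F := fun θ => |deriv (fun v => N v * v) (c - θ * (c - u p))|)
      (hB' p hp) hθ).trans ?_
    exact le_bisup_aux (F := fun p => ⨆ θ ∈ Icc (0 : ℝ) 1,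
      |deriv (fun v => N v * v) (c - θ * (c - u p))|) (B := B)
      (fun p hp => bisup_le_aux hB0 (hB' p hp)) hp
  have := Convex.norm_image_sub_le_of_norm_deriv_le (f := fun v => N v * v) (x := u p) (y := c)
    (s := segment ℝ c (u p)) (C := coefL X Y N₁ N₂ N u u0 i j)
    (fun v _ => (hG.differentiable one_ne_zero) v) (by
      intro v hv
      rw [segment_eq_image'] at hv
      obtain ⟨θ, hθ, rfl⟩ := hv
      have := hL θ hθ
      have e : c + θ • (u p - c) = c - θ * (c - u p) := by simp only [smul_eq_mul]; ring
      beta_reduce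
      rw [e, Real.norm_eq_abs]
      exact this) (convex_segment _ _) (right_mem_segment ℝ _ _)
      (left_mem_segment ℝ _ _)
  rw [abs_sub_comm (u p) c]
  exact this

lemma le_znorm {X Y : ℝ} {N₁ N₂ : ℕ} {z : ℝ × ℝ → ℝ} {i j : ℕ} (hi : i ≠ 0) (hj : j ≠ 0)
    (hz : ContinuousOn z (cellCl X Y N₁ N₂ i j)) {p : ℝ × ℝ} (hp : p ∈ cellCl X Y N₁ N₂ i j) :
    |z p| ≤ znorm X Y N₁ N₂ z i j := by
  rw [znorm, if_neg (by tauto)]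
  exact le_bisup_cont (cellCl_compact X Y N₁ N₂ i j) hz hp

lemma mesh_le {X : ℝ} (hX : 0 < X) {N₁ i : ℕ} (h1 : 1 ≤ i) (h2 : i ≤ N₁) :
    0 ≤ ((i : ℝ) - 1) * (X / N₁) ∧ (i : ℝ) * (X / N₁) ≤ X ∧
      ((i : ℝ) - 1) * (X / N₁) ≤ (i : ℝ) * (X / N₁) ∧ 0 ≤ X / N₁ := by
  have hN : (0 : ℝ) < N₁ := by exact_mod_cast (h1.trans h2)
  have hi : (1 : ℝ) ≤ i := by exact_mod_cast h1
  have hi2 : (i : ℝ) ≤ N₁ := by exact_mod_cast h2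
  have hh : 0 ≤ X / N₁ := by positivity
  refine ⟨mul_nonneg (by linarith) hh, ?_, mul_le_mul_of_nonneg_right (by linarith) hh, hh⟩
  calc (i : ℝ) * (X / N₁) ≤ N₁ * (X / N₁) := by gcongr
    _ = X := by field_simp

lemma cellCl_sub {X Y : ℝ} (hX : 0 < X) (hY : 0 < Y) {N₁ N₂ i j : ℕ} (h1 : 1 ≤ i) (h2 : i ≤ N₁)
    (h3 : 1 ≤ j) (h4 : j ≤ N₂) : cellCl X Y N₁ N₂ i j ⊆ clD X Y := by
  obtain ⟨a1, a2, _⟩ := mesh_le hX h1 h2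
  obtain ⟨b1, b2, _⟩ := mesh_le hY h3 h4
  exact prod_mono (Icc_subset_Icc a1 a2) (Icc_subset_Icc b1 b2)

lemma cellOp_sub {X Y : ℝ} (hX : 0 < X) (hY : 0 < Y) {N₁ N₂ i j : ℕ} (h1 : 1 ≤ i) (h2 : i ≤ N₁)
    (h3 : 1 ≤ j) (h4 : j ≤ N₂) : cellOp X Y N₁ N₂ i j ⊆ opD X Y := by
  obtain ⟨a1, a2, _⟩ := mesh_le hX h1 h2
  obtain ⟨b1, b2, _⟩ := mesh_le hY h3 h4
  exact prod_mono (Ioo_subset_Ioo a1 a2) (Ioo_subset_Ioo b1 b2)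

lemma lip_aux {X : ℝ} {ψ : ℝ → ℝ} (hψc : ContinuousOn ψ (Icc 0 X))
    (hψd : ∀ x ∈ Ioo (0 : ℝ) X, DifferentiableAt ℝ ψ x)
    (hbψ : BddAbove ((fun x => |deriv ψ x|) '' Ioo 0 X)) {a b : ℝ} (ha : 0 ≤ a) (hab : a ≤ b)
    (hb : b ≤ X) : |ψ b - ψ a| ≤ (⨆ x ∈ Ioo (0 : ℝ) X, |deriv ψ x|) * (b - a) := by
  obtain ⟨B, hB⟩ := hbψ
  rcases hab.eq_or_lt with rfl | hab
  · simp
  obtain ⟨c, hc, hc'⟩ := exists_deriv_eq_slope ψ hab (hψc.mono (Icc_subset_Icc ha hb))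
    (fun x hx => (hψd x (Ioo_subset_Ioo ha hb hx)).differentiableWithinAt)
  have hc1 : |deriv ψ c| ≤ ⨆ x ∈ Ioo (0 : ℝ) X, |deriv ψ x| :=
    le_bisup_aux (F := fun x => |deriv ψ x|) (B := B) (fun x hx => hB ⟨x, hx, rfl⟩)
      (Ioo_subset_Ioo ha hb hc)
  have hpos : 0 < b - a := by linarith
  rw [hc', abs_div, abs_of_pos hpos, div_le_iff₀ hpos] at hc1
  exact hc1

lemma u_lip {X Y : ℝ} (hX : 0 < X) (hY : 0 < Y) {N : ℝ → ℝ} (hN : ContDiff ℝ 1 N)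
    {f : ℝ × ℝ → ℝ} (hf : ContinuousOn f (clD X Y)) {ψ φ : ℝ → ℝ}
    (hψc : ContinuousOn ψ (Icc 0 X))
    (hψd : ∀ x ∈ Ioo (0 : ℝ) X, DifferentiableAt ℝ ψ x)
    (hφc : ContinuousOn φ (Icc 0 Y))
    (hφd : ∀ y ∈ Ioo (0 : ℝ) Y, DifferentiableAt ℝ φ y)
    {u : ℝ × ℝ → ℝ} (hu : GoursatSol X Y N f ψ φ u)
    (hbψ : BddAbove ((fun x => |deriv ψ x|) '' Ioo 0 X))
    (hbφ : BddAbove ((fun y => |deriv φ y|) '' Ioo 0 Y))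
    {a b c d k l : ℝ} (ha : 0 ≤ a) (hab : a ≤ b) (hb : b ≤ X) (hc : 0 ≤ c) (hcd : c ≤ d) (hd : d ≤ Y)
    (hk : b - a ≤ k) (hl : d - c ≤ l) :
    |u (b, d) - u (a, c)| ≤ Real.sqrt (k ^ 2 + l ^ 2) * constA X Y N f ψ φ u := by
  have hcompact : IsCompact (clD X Y) := isCompact_Icc.prod isCompact_Icc
  unfold constA
  set M := (⨆ p ∈ clD X Y, |f p|) + (⨆ p ∈ clD X Y, |N (u p)|) * ⨆ p ∈ clD X Y, |u p| with hM
  have hNu : ContinuousOn (fun p => N (u p)) (clD X Y) := hN.continuous.comp_continuousOn hu.cont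
  have hM0 : 0 ≤ M := add_nonneg (bisup_nonneg_aux fun _ => abs_nonneg _)
    (mul_nonneg (bisup_nonneg_aux fun _ => abs_nonneg _) (bisup_nonneg_aux fun _ => abs_nonneg _))
  have hsub : opD X Y ⊆ clD X Y := prod_mono Ioo_subset_Icc_self Ioo_subset_Icc_self
  have hxyb : ∀ p ∈ opD X Y, |pdxy u p| ≤ M := by
    intro p hp
    have e : pdxy u p = f p - N (u p) * u p := by linarith [hu.eqn p hp]
    rw [e]
    refine (abs_sub _ _).trans ?_
    rw [abs_mul]
    have h1 := le_bisup_cont hcompact hf (hsub hp)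
    have h2 := le_bisup_cont hcompact hNu (hsub hp)
    have h3 := le_bisup_cont hcompact hu.cont (hsub hp)
    exact add_le_add h1 (mul_le_mul h2 h3 (abs_nonneg _) ((abs_nonneg _).trans h2))
  have rect : ∀ a b c d : ℝ, 0 ≤ a → a ≤ b → b ≤ X → 0 ≤ c → c ≤ d → d ≤ Y →
      |u (b, d) - u (a, d) - u (b, c) + u (a, c)| ≤ M * (b - a) * (d - c) := by
    intro a b c d ha hab hb hc hcd hd
    have hs : ∀ s ∈ Ioo a b, ∀ t ∈ Ioo c d, (s, t) ∈ opD X Y := fun s hs t ht =>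
      ⟨Ioo_subset_Ioo ha hb hs, Ioo_subset_Ioo hc hd ht⟩
    exact rect_bound_const (fun s t => u (s, t)) (fun s t => pdx u (s, t))
      (fun s t => pdxy u (s, t)) hab hcd
      (hu.cont.mono (prod_mono (Icc_subset_Icc ha hb) (Icc_subset_Icc hc hd)))
      (fun s hs' t ht => (hu.diffx _ (hs s hs' t ht)).hasDerivAt)
      (fun s hs' t ht => (hu.diffxy _ (hs s hs' t ht)).hasDerivAt)
      (fun s hs' t ht => hxyb _ (hs s hs' t ht))
  set P := ⨆ x ∈ Ioo (0 : ℝ) X, |deriv ψ x| with hP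
  set Q := ⨆ y ∈ Ioo (0 : ℝ) Y, |deriv φ y| with hQ
  have hP0 : 0 ≤ P := bisup_nonneg_aux fun _ => abs_nonneg _
  have hQ0 : 0 ≤ Q := bisup_nonneg_aux fun _ => abs_nonneg _
  have hba : 0 ≤ b - a := by linarith
  have hdc : 0 ≤ d - c := by linarith
  -- horizontal increment
  have h1 : |u (b, d) - u (a, d)| ≤ (P + Y * M) * k := by
    have r := rect a b 0 d ha hab hb le_rfl (hc.trans hcd) hd
    rw [hu.bc1 b ⟨ha.trans hab, hb⟩, hu.bc1 a ⟨ha, hab.trans hb⟩] at r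
    have l := lip_aux hψc hψd hbψ ha hab hb
    have hMd : M * (b - a) * (d - 0) ≤ M * (b - a) * Y := by
      have : d - 0 ≤ Y := by linarith
      gcongr
    have : |u (b, d) - u (a, d)| ≤
        |u (b, d) - u (a, d) - ψ b + ψ a| + |ψ b - ψ a| := by
      have e : u (b, d) - u (a, d) = (u (b, d) - u (a, d) - ψ b + ψ a) + (ψ b - ψ a) := by ring
      calc _ = |(u (b, d) - u (a, d) - ψ b + ψ a) + (ψ b - ψ a)| := by rw [← e]
        _ ≤ _ := abs_add_le _ _
    have hle : (P + Y * M) * (b - a) ≤ (P + Y * M) * k := by gcongr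
    linarith
  have h2 : |u (a, d) - u (a, c)| ≤ (Q + X * M) * l := by
    have r := rect 0 a c d le_rfl ha (hab.trans hb) hc hcd hd
    rw [hu.bc2 d ⟨hc.trans hcd, hd⟩, hu.bc2 c ⟨hc, hcd.trans hd⟩] at r
    have l' := lip_aux hφc hφd hbφ hc hcd hd
    have hMd : M * (a - 0) * (d - c) ≤ M * X * (d - c) := by
      have : a - 0 ≤ X := by linarith
      gcongr
    have : |u (a, d) - u (a, c)| ≤
        |u (a, d) - φ d - u (a, c) + φ c| + |φ d - φ c| := by
      have e : u (a, d) - u (a, c) = (u (a, d) - φ d - u (a, c) + φ c) + (φ d - φ c) := by ring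
      calc _ = |(u (a, d) - φ d - u (a, c) + φ c) + (φ d - φ c)| := by rw [← e]
        _ ≤ _ := abs_add_le _ _
    have hle : (Q + X * M) * (d - c) ≤ (Q + X * M) * l := by gcongr
    linarith
  have h3 : |u (b, d) - u (a, c)| ≤ |u (b, d) - u (a, d)| + |u (a, d) - u (a, c)| :=
    abs_sub_le _ _ _
  rw [← Real.sqrt_mul (by positivity)]
  refine (h3.trans (add_le_add h1 h2)).trans (Real.le_sqrt_of_sq_le ?_)
  nlinarith [sq_nonneg ((P + Y * M) * l - (Q + X * M) * k)]

lemma cell_src {X Y : ℝ} (hX : 0 < X) (hY : 0 < Y) {N : ℝ → ℝ} (hN : ContDiff ℝ 1 N)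
    {f : ℝ × ℝ → ℝ} (hf : ContinuousOn f (clD X Y)) {ψ φ : ℝ → ℝ}
    (hψc : ContinuousOn ψ (Icc 0 X))
    (hψd : ∀ x ∈ Ioo (0 : ℝ) X, DifferentiableAt ℝ ψ x)
    (hφc : ContinuousOn φ (Icc 0 Y))
    (hφd : ∀ y ∈ Ioo (0 : ℝ) Y, DifferentiableAt ℝ φ y)
    {u u0 : ℝ × ℝ → ℝ} (hu : GoursatSol X Y N f ψ φ u)
    (hbψ : BddAbove ((fun x => |deriv ψ x|) '' Ioo 0 X))
    (hbφ : BddAbove ((fun y => |deriv φ y|) '' Ioo 0 Y))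
    {N₁ N₂ : ℕ} (hu0 : BasicSol X Y N f ψ φ N₁ N₂ u0)
    {i j : ℕ} (h1 : 1 ≤ i) (h2 : i ≤ N₁) (h3 : 1 ≤ j) (h4 : j ≤ N₂)
    {p : ℝ × ℝ} (hp : p ∈ cellOp X Y N₁ N₂ i j) :
    |pdxy u p - pdxy u0 p| ≤ coefN X Y N₁ N₂ N u0 i j * |u p - u0 p| +
      (coefN X Y N₁ N₂ N u0 i j + coefL X Y N₁ N₂ N u u0 i j) *
        (meshH X Y N₁ N₂ * constA X Y N f ψ φ u +
          |u (meshNode X Y N₁ N₂ i j) - u0 (meshNode X Y N₁ N₂ i j)|) := by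
  have hpc : p ∈ cellCl X Y N₁ N₂ i j := prod_mono Ioo_subset_Icc_self Ioo_subset_Icc_self hp
  have hL := coefL_bound (u0 := u0) hN (hu.cont.mono (cellCl_sub hX hY h1 h2 h3 h4)) hpc
  have hL0 := coefL_nonneg X Y N₁ N₂ N u u0 i j
  have e1 := hu.eqn p (cellOp_sub hX hY h1 h2 h3 h4 hp)
  have e2 := hu0.eqn i (Finset.mem_Icc.2 ⟨h1, h2⟩) j (Finset.mem_Icc.2 ⟨h3, h4⟩) p hp
  obtain ⟨a1, a2, a3, a4⟩ := mesh_le hX h1 h2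
  obtain ⟨b1, b2, b3, b4⟩ := mesh_le hY h3 h4
  have hlip : |u p - u (meshNode X Y N₁ N₂ i j)| ≤ meshH X Y N₁ N₂ * constA X Y N f ψ φ u :=
    u_lip hX hY hN hf hψc hψd hφc hφd hu hbψ hbφ (a := ((i : ℝ) - 1) * (X / N₁)) (b := p.1)
      (c := ((j : ℝ) - 1) * (Y / N₂)) (d := p.2) a1 hpc.1.1 (hpc.1.2.trans a2) b1 hpc.2.1
      (hpc.2.2.trans b2) (by linarith [hpc.1.2]) (by linarith [hpc.2.2])
  have htri := abs_sub_le (u p) (u (meshNode X Y N₁ N₂ i j)) (u0 (meshNode X Y N₁ N₂ i j))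
  unfold coefN
  set c := u0 (meshNode X Y N₁ N₂ i j) with hc
  have e : pdxy u p - pdxy u0 p =
      -(N c * (u p - u0 p)) + N c * (u p - c) + (N c * c - N (u p) * u p) := by linarith
  rw [e]
  refine (abs_add_three _ _ _).trans ?_
  rw [abs_neg, abs_mul, abs_mul, add_assoc]
  refine add_le_add_right ?_ _
  calc |N c| * |u p - c| + |N c * c - N (u p) * u p|
      ≤ |N c| * |u p - c| + coefL X Y N₁ N₂ N u u0 i j * |u p - c| := by gcongr
    _ = (|N c| + coefL X Y N₁ N₂ N u u0 i j) * |u p - c| := by ring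
    _ ≤ _ := by
      refine mul_le_mul_of_nonneg_left ?_ (by positivity)
      linarith

/-- First inequality of the auxiliary lemma: with `z = u − u⁰`,
`‖z‖_{i,j} ≤ ‖z‖_{i−1,j}(1 + h₁h₂R′_{i,j})
 + h₁R_{i,j}·h₂·Σ_{s=1}^{j−1}[(2N_{i,s}+L_{i,s})‖z‖_{i,s} + h(N_{i,s}+L_{i,s})A]
 + h₁h₂R_{i,j}(L_{i,j}+N_{i,j})‖z‖_{i,j−1} + h₁h₂hR_{i,j}(N_{i,j}+L_{i,j})A`. -/
theorem z_norm_first_inequality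
    (X Y : ℝ) (hX : 0 < X) (hY : 0 < Y)
    (ν : ℕ → ℝ) (N : ℝ → ℝ)
    (hN : ∀ v : ℝ, HasSum (fun s : ℕ => ν s * v ^ s) (N v))
    (f : ℝ × ℝ → ℝ) (hf : ContinuousOn f (clD X Y))
    (ψ φ : ℝ → ℝ)
    (hψc : ContinuousOn ψ (Icc 0 X))
    (hψd : ∀ x ∈ Ioo (0 : ℝ) X, DifferentiableAt ℝ ψ x)
    (hφc : ContinuousOn φ (Icc 0 Y))
    (hφd : ∀ y ∈ Ioo (0 : ℝ) Y, DifferentiableAt ℝ φ y)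
    (hcomp : ψ 0 = φ 0)
    (N₁ N₂ : ℕ) (hN₁ : 1 ≤ N₁) (hN₂ : 1 ≤ N₂)
    (u : ℝ × ℝ → ℝ) (hu : GoursatSol X Y N f ψ φ u)
    (hbψ : BddAbove ((fun x => |deriv ψ x|) '' Ioo 0 X))
    (hbφ : BddAbove ((fun y => |deriv φ y|) '' Ioo 0 Y))
    (huex : ∀ i ∈ Finset.Icc 1 N₁, ∀ j ∈ Finset.Icc 1 N₂,
      ∃ g : ℝ × ℝ → ℝ, ContinuousOn g (cellCl X Y N₁ N₂ i j) ∧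
        EqOn g (pdx u) (cellOp X Y N₁ N₂ i j))
    (huey : ∀ i ∈ Finset.Icc 1 N₁, ∀ j ∈ Finset.Icc 1 N₂,
      ∃ g : ℝ × ℝ → ℝ, ContinuousOn g (cellCl X Y N₁ N₂ i j) ∧
        EqOn g (pdy u) (cellOp X Y N₁ N₂ i j))
    (huexy : ∀ i ∈ Finset.Icc 1 N₁, ∀ j ∈ Finset.Icc 1 N₂,
      ∃ g : ℝ × ℝ → ℝ, ContinuousOn g (cellCl X Y N₁ N₂ i j) ∧
        EqOn g (pdxy u) (cellOp X Y N₁ N₂ i j))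
    (u0 : ℝ × ℝ → ℝ) (hu0 : BasicSol X Y N f ψ φ N₁ N₂ u0)
    (hu0ex : ∀ i ∈ Finset.Icc 1 N₁, ∀ j ∈ Finset.Icc 1 N₂,
      ∃ g : ℝ × ℝ → ℝ, ContinuousOn g (cellCl X Y N₁ N₂ i j) ∧
        EqOn g (pdx u0) (cellOp X Y N₁ N₂ i j))
    (hu0ey : ∀ i ∈ Finset.Icc 1 N₁, ∀ j ∈ Finset.Icc 1 N₂,
      ∃ g : ℝ × ℝ → ℝ, ContinuousOn g (cellCl X Y N₁ N₂ i j) ∧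
        EqOn g (pdy u0) (cellOp X Y N₁ N₂ i j))
    (hu0exy : ∀ i ∈ Finset.Icc 1 N₁, ∀ j ∈ Finset.Icc 1 N₂,
      ∃ g : ℝ × ℝ → ℝ, ContinuousOn g (cellCl X Y N₁ N₂ i j) ∧
        EqOn g (pdxy u0) (cellOp X Y N₁ N₂ i j)) :
    ∀ i ∈ Finset.Icc 1 N₁, ∀ j ∈ Finset.Icc 1 N₂,
      znorm X Y N₁ N₂ (fun p => u p - u0 p) i j ≤
        znorm X Y N₁ N₂ (fun p => u p - u0 p) (i - 1) j *
            (1 + (X / N₁) * (Y / N₂) * coefR' X Y N₁ N₂ N u0 i j) +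
          (X / N₁) * coefR X Y N₁ N₂ N u0 i j *
            ((Y / N₂) * ∑ s ∈ Finset.Icc 1 (j - 1),
              ((2 * coefN X Y N₁ N₂ N u0 i s + coefL X Y N₁ N₂ N u u0 i s) *
                  znorm X Y N₁ N₂ (fun p => u p - u0 p) i s +
                meshH X Y N₁ N₂ *
                  (coefN X Y N₁ N₂ N u0 i s + coefL X Y N₁ N₂ N u u0 i s) *
                  constA X Y N f ψ φ u)) +
          (X / N₁) * (Y / N₂) * coefR X Y N₁ N₂ N u0 i j *
            (coefL X Y N₁ N₂ N u u0 i j + coefN X Y N₁ N₂ N u0 i j) *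
            znorm X Y N₁ N₂ (fun p => u p - u0 p) i (j - 1) +
          (X / N₁) * (Y / N₂) * meshH X Y N₁ N₂ * coefR X Y N₁ N₂ N u0 i j *
            (coefN X Y N₁ N₂ N u0 i j + coefL X Y N₁ N₂ N u u0 i j) *
            constA X Y N f ψ φ u := by
  have hNc := entire_contDiff hN
  intro i hi j hj
  obtain ⟨i1, i2⟩ := Finset.mem_Icc.1 hi
  obtain ⟨j1, j2⟩ := Finset.mem_Icc.1 hj
  set z : ℝ × ℝ → ℝ := fun p => u p - u0 p with hz
  set A := constA X Y N f ψ φ u with hA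
  set h := meshH X Y N₁ N₂ with hh
  obtain ⟨a1, a2, a3, a4⟩ := mesh_le hX i1 i2
  obtain ⟨b1, b2, b3, b4⟩ := mesh_le hY j1 j2
  have hA0 : 0 ≤ A := Real.sqrt_nonneg _
  have hh0 : 0 ≤ h := Real.sqrt_nonneg _
  have hzc : ContinuousOn z (clD X Y) := hu.cont.sub hu0.cont
  have hzcell : ∀ i j, 1 ≤ i → i ≤ N₁ → 1 ≤ j → j ≤ N₂ →
      ContinuousOn z (cellCl X Y N₁ N₂ i j) :=
    fun i j h1 h2 h3 h4 => hzc.mono (cellCl_sub hX hY h1 h2 h3 h4)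
  have hz1 : ∀ x ∈ Icc (0 : ℝ) X, z (x, 0) = 0 := fun x hx => by
    simp only [hz]; rw [hu.bc1 x hx, hu0.bc1 x hx, sub_self]
  have hz2 : ∀ y ∈ Icc (0 : ℝ) Y, z (0, y) = 0 := fun y hy => by
    simp only [hz]; rw [hu.bc2 y hy, hu0.bc2 y hy, sub_self]
  have hN0 : ∀ i j, 0 ≤ coefN X Y N₁ N₂ N u0 i j := fun i j => abs_nonneg _
  have hL0 : ∀ i j, 0 ≤ coefL X Y N₁ N₂ N u u0 i j := fun i j => coefL_nonneg _ _ _ _ _ _ _ _ _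
  have hZ0 : ∀ i j, 0 ≤ znorm X Y N₁ N₂ z i j := fun i j => znorm_nonneg _ _ _ _ _ _ _
  have hsrc : ∀ j, 1 ≤ j → j ≤ N₂ → ∀ p ∈ cellOp X Y N₁ N₂ i j, |pdxy u p - pdxy u0 p| ≤
      coefN X Y N₁ N₂ N u0 i j * |z p| +
      (coefN X Y N₁ N₂ N u0 i j + coefL X Y N₁ N₂ N u u0 i j) *
        (h * A + |z (meshNode X Y N₁ N₂ i j)|) := fun j h3 h4 p hp =>
    cell_src hX hY hNc hf hψc hψd hφc hφd hu hbψ hbφ hu0 i1 i2 h3 h4 hp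
  have hdx : ∀ j, 1 ≤ j → j ≤ N₂ → ∀ p ∈ cellOp X Y N₁ N₂ i j,
      HasDerivAt (fun s => z (s, p.2)) (pdx u p - pdx u0 p) p.1 := fun j h3 h4 p hp =>
    (hu.diffx p (cellOp_sub hX hY i1 i2 h3 h4 hp)).hasDerivAt.sub
      (hu0.diffx i hi j (Finset.mem_Icc.2 ⟨h3, h4⟩) p hp).hasDerivAt
  have hdxy : ∀ j, 1 ≤ j → j ≤ N₂ → ∀ p ∈ cellOp X Y N₁ N₂ i j,
      HasDerivAt (fun t => pdx u (p.1, t) - pdx u0 (p.1, t)) (pdxy u p - pdxy u0 p) p.2 :=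
    fun j h3 h4 p hp =>
    (hu.diffxy p (cellOp_sub hX hY i1 i2 h3 h4 hp)).hasDerivAt.sub
      (hu0.diffxy i hi j (Finset.mem_Icc.2 ⟨h3, h4⟩) p hp).hasDerivAt
  set E : ℕ → ℝ := fun s => (2 * coefN X Y N₁ N₂ N u0 i s + coefL X Y N₁ N₂ N u u0 i s) *
    znorm X Y N₁ N₂ z i s + h * (coefN X Y N₁ N₂ N u0 i s + coefL X Y N₁ N₂ N u u0 i s) * A with hE
  have hE0 : ∀ s, 0 ≤ E s := by
    intro s
    have := hN0 i s; have := hL0 i s; have := hZ0 i s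
    simp only [hE]; positivity
  -- increments along the horizontal mesh lines
  have hline : ∀ m : ℕ, m ≤ N₂ → ∀ s ∈ Icc (((i : ℝ) - 1) * (X / N₁)) ((i : ℝ) * (X / N₁)),
      |z (s, (m : ℝ) * (Y / N₂)) - z (((i : ℝ) - 1) * (X / N₁), (m : ℝ) * (Y / N₂))| ≤
        ((Y / N₂) * ∑ k ∈ Finset.Icc 1 m, E k) * (s - ((i : ℝ) - 1) * (X / N₁)) := by
    intro m
    induction m with
    | zero =>
      intro _ s hs
      have e1 := hz1 s ⟨a1.trans hs.1, hs.2.trans a2⟩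
      have e2 := hz1 (((i : ℝ) - 1) * (X / N₁)) ⟨a1, a3.trans a2⟩
      simp [e1, e2]
    | succ m ih =>
      intro hm s hs
      have ih' := ih (by omega) s hs
      have m1 : 1 ≤ m + 1 := by omega
      obtain ⟨c1, c2, c3, c4⟩ := mesh_le hY m1 hm
      have hsub : ∀ s' ∈ Ioo (((i : ℝ) - 1) * (X / N₁)) s,
          ∀ t ∈ Ioo ((((m + 1 : ℕ) : ℝ) - 1) * (Y / N₂)) (((m + 1 : ℕ) : ℝ) * (Y / N₂)),
          (s', t) ∈ cellOp X Y N₁ N₂ i (m + 1) := fun s' hs' t ht =>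
        ⟨Ioo_subset_Ioo_right hs.2 hs', ht⟩
      have hnode : meshNode X Y N₁ N₂ i (m + 1) ∈ cellCl X Y N₁ N₂ i (m + 1) :=
        ⟨left_mem_Icc.2 a3, left_mem_Icc.2 c3⟩
      have r := rect_bound_const (fun s t => z (s, t)) (fun s t => pdx u (s, t) - pdx u0 (s, t))
        (fun s t => pdxy u (s, t) - pdxy u0 (s, t)) (M := E (m + 1)) hs.1 c3
        ((hzcell i (m + 1) i1 i2 m1 hm).mono (prod_mono (Icc_subset_Icc_right hs.2) le_rfl))
        (fun s' hs' t ht => hdx (m + 1) m1 hm _ (hsub s' hs' t ht))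
        (fun s' hs' t ht => hdxy (m + 1) m1 hm _ (hsub s' hs' t ht))
        (by
          intro s' hs' t ht
          have hmem := hsub s' hs' t ht
          refine (hsrc (m + 1) m1 hm _ hmem).trans ?_
          have q1 := le_znorm (by omega) (by omega) (hzcell i (m + 1) i1 i2 m1 hm)
            (prod_mono Ioo_subset_Icc_self Ioo_subset_Icc_self hmem)
          have q2 := le_znorm (by omega) (by omega) (hzcell i (m + 1) i1 i2 m1 hm) hnode
          have n0 := hN0 i (m + 1)
          have l0 := hL0 i (m + 1)
          have q3 := mul_le_mul_of_nonneg_left q1 n0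
          have q4 := mul_le_mul_of_nonneg_left q2 (add_nonneg n0 l0)
          simp only [hE]
          linarith)
      rw [Finset.sum_Icc_succ_top m1]
      have ec : (((m + 1 : ℕ) : ℝ) - 1) * (Y / N₂) = (m : ℝ) * (Y / N₂) := by push_cast; ring
      have ed : ((m + 1 : ℕ) : ℝ) * (Y / N₂) - (m : ℝ) * (Y / N₂) = Y / N₂ := by push_cast; ring
      rw [ec, ed] at r
      set t1 := ((m + 1 : ℕ) : ℝ) * (Y / N₂)
      set t0 := (m : ℝ) * (Y / N₂)
      set s0 := ((i : ℝ) - 1) * (X / N₁)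
      have e : z (s, t1) - z (s0, t1) = (z (s, t1) - z (s0, t1) - z (s, t0) + z (s0, t0)) +
        (z (s, t0) - z (s0, t0)) := by ring
      rw [e]
      refine (abs_add_le _ _).trans ((add_le_add r ih').trans (le_of_eq ?_))
      ring
  set n := coefN X Y N₁ N₂ N u0 i j with hn
  set l := coefL X Y N₁ N₂ N u u0 i j with hl
  have hnode : |z (meshNode X Y N₁ N₂ i j)| ≤ znorm X Y N₁ N₂ z i (j - 1) := by
    by_cases hj1 : j = 1
    · have : z (meshNode X Y N₁ N₂ i j) = 0 := by
        have := hz1 (((i : ℝ) - 1) * (X / N₁)) ⟨a1, a3.trans a2⟩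
        simpa [meshNode, hj1] using this
      rw [this, abs_zero]
      exact hZ0 _ _
    · have k1 : 1 ≤ j - 1 := by omega
      have k2 : j - 1 ≤ N₂ := by omega
      obtain ⟨_, _, c3, _⟩ := mesh_le hY k1 k2
      refine le_znorm (by omega) (by omega) (hzcell i (j - 1) i1 i2 k1 k2) ⟨left_mem_Icc.2 a3, ?_⟩
      have : ((j : ℝ) - 1) * (Y / N₂) = ((j - 1 : ℕ) : ℝ) * (Y / N₂) := by
        push_cast [j1]; ring
      simp only [meshNode]
      rw [this]
      exact right_mem_Icc.2 c3
  have hleft : ∀ t ∈ Icc (((j : ℝ) - 1) * (Y / N₂)) ((j : ℝ) * (Y / N₂)),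
      |z (((i : ℝ) - 1) * (X / N₁), t)| ≤ znorm X Y N₁ N₂ z (i - 1) j := by
    intro t ht
    by_cases hi1 : i = 1
    · have : z (((i : ℝ) - 1) * (X / N₁), t) = 0 := by
        have := hz2 t ⟨b1.trans ht.1, ht.2.trans b2⟩
        simpa [hi1] using this
      rw [this, abs_zero]
      exact hZ0 _ _
    · have k1 : 1 ≤ i - 1 := by omega
      have k2 : i - 1 ≤ N₁ := by omega
      obtain ⟨_, _, c3, _⟩ := mesh_le hX k1 k2
      refine le_znorm (by omega) (by omega) (hzcell (i - 1) j k1 k2 j1 j2) ⟨?_, ht⟩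
      have : ((i : ℝ) - 1) * (X / N₁) = ((i - 1 : ℕ) : ℝ) * (X / N₁) := by
        push_cast [i1]; ring
      simp only
      rw [this]
      exact right_mem_Icc.2 c3
  have hn0 : 0 ≤ n := hN0 i j
  have hl0 : 0 ≤ l := hL0 i j
  set α := znorm X Y N₁ N₂ z (i - 1) j with hα
  set ζ := znorm X Y N₁ N₂ z i (j - 1) with hζ
  have hα0 : 0 ≤ α := hZ0 _ _
  have hζ0 : 0 ≤ ζ := hZ0 _ _
  set β := (Y / N₂) * ∑ s ∈ Finset.Icc 1 (j - 1), E s with hβ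
  have hβ0 : 0 ≤ β := mul_nonneg b4 (Finset.sum_nonneg fun s _ => hE0 s)
  set γ := (n + l) * (h * A + ζ) with hγ
  have hγ0 : 0 ≤ γ := by positivity
  have ex : (i : ℝ) * (X / N₁) - ((i : ℝ) - 1) * (X / N₁) = X / N₁ := by ring
  have ey : (j : ℝ) * (Y / N₂) - ((j : ℝ) - 1) * (Y / N₂) = Y / N₂ := by ring
  have G := gron (fun s t => z (s, t)) (fun s t => pdx u (s, t) - pdx u0 (s, t))
    (fun s t => pdxy u (s, t) - pdxy u0 (s, t)) (n := n) (γ := γ) (α := α) (β := β)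
    a3 b3 hn0 hγ0 hβ0 (hzcell i j i1 i2 j1 j2)
    (fun s hs t ht => hdx j j1 j2 (s, t) ⟨hs, ht⟩)
    (fun s hs t ht => hdxy j j1 j2 (s, t) ⟨hs, ht⟩)
    (fun s hs t ht => by
      refine (hsrc j j1 j2 (s, t) ⟨hs, ht⟩).trans ?_
      have := mul_le_mul_of_nonneg_left hnode (add_nonneg hn0 hl0)
      simp only [hγ]
      linarith)
    hleft
    (by
      intro s hs
      have := hline (j - 1) (by omega) s hs
      have e : ((j - 1 : ℕ) : ℝ) = (j : ℝ) - 1 := by push_cast [j1]; ring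
      rwa [e] at this)
  rw [ex, ey] at G
  have hR : coefR X Y N₁ N₂ N u0 i j = hyp0F1 1 (n * (X / N₁) * (Y / N₂)) := rfl
  have hR' : coefR' X Y N₁ N₂ N u0 i j = hyp0F1 2 (n * (X / N₁) * (Y / N₂)) * n := rfl
  have hW0 : 0 ≤ n * (X / N₁) * (Y / N₂) := by positivity
  have hRR := hyp_one_le hW0
  have hR0 := hyp_one_nonneg hW0
  rw [hR, hR']
  set R := hyp0F1 1 (n * (X / N₁) * (Y / N₂))
  set R' := hyp0F1 2 (n * (X / N₁) * (Y / N₂))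
  have hlast : znorm X Y N₁ N₂ z i j ≤
      (α + β * (X / N₁) + γ * (X / N₁) * (Y / N₂)) * R := by
    rw [znorm, if_neg (by omega)]
    refine bisup_le_aux ?_ (fun p hp => G p.1 hp.1 p.2 hp.2)
    positivity
  have hαR := mul_le_mul_of_nonneg_left hRR hα0
  refine hlast.trans ?_
  have : (α + β * (X / N₁) + γ * (X / N₁) * (Y / N₂)) * R =
      α * R + (X / N₁) * R * β + (X / N₁) * (Y / N₂) * R * (l + n) * ζ +
        (X / N₁) * (Y / N₂) * h * R * (n + l) * A := by
    simp only [hγ]; ring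
  rw [this]
  have e3 : α * (1 + n * (X / N₁) * (Y / N₂) * R') =
      α * (1 + (X / N₁) * (Y / N₂) * (R' * n)) := by ring
  linarith
end
end

section
/- Let X, Y > 0, let N₁, N₂ ≥ 1 be integers, h₁ = X/N₁, h₂ = Y/N₂, h = √(h₁² + h₂²), and assume h₁ ≤ h₂. Let a₁, b₁, c₁ ≥ 0 and set a = 1 + h₁a₁, b = h₁b₁, c = h₁·h·c₁. Define μ_{i,j} for i ∈ {0,…,N₁}, j ∈ {0,…,N₂} by μ_{0,j} = μ_{i,0} = 0 and μ_{i,j} = a·μ_{i−1,j} + b·μ_{i,j−1} + c for i, j ≥ 1. Then μ_{i,j} ≤ h·X·c₁·exp((X + Y)·b₁ + X·a₁) for all i ∈ {1,…,N₁}, j ∈ {1,…,N₂}. -/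
/-- Discrete bound, by double induction. -/
theorem mu_aux (a b c : ℝ) (ha : 1 ≤ a) (hb : 0 ≤ b) (hc : 0 ≤ c) (N₁ N₂ : ℕ)
    (μ : ℕ → ℕ → ℝ)
    (h0 : ∀ j ≤ N₂, μ 0 j = 0) (h0' : ∀ i ≤ N₁, μ i 0 = 0)
    (hrec : ∀ i j : ℕ, 1 ≤ i → i ≤ N₁ → 1 ≤ j → j ≤ N₂ →
      μ i j = a * μ (i - 1) j + b * μ i (j - 1) + c) :
    ∀ i ≤ N₁, ∀ j ≤ N₂, μ i j ≤ c * (i * ((a * (1 + b)) ^ i * (1 + b) ^ j)) := by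
  intro i
  induction i with
  | zero => intro _ j hj; simp [h0 j hj]
  | succ i ih =>
    intro hi j
    induction j with
    | zero => intro _; rw [h0' _ hi]; positivity
    | succ j ihj =>
      intro hj
      have h1 := ih (by omega) (j + 1) hj
      have h2 := ihj (by omega)
      rw [hrec (i + 1) (j + 1) (by omega) hi (by omega) hj]
      simp only [Nat.add_sub_cancel]
      have hA : 1 ≤ a * (1 + b) := by nlinarith
      have hP : 1 ≤ (a * (1 + b)) ^ (i + 1) * (1 + b) ^ j :=
        one_le_mul_of_one_le_of_one_le (one_le_pow₀ hA) (one_le_pow₀ (by linarith))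
      have h3 := mul_le_mul_of_nonneg_left h1 (by linarith : (0 : ℝ) ≤ a)
      have h4 := mul_le_mul_of_nonneg_left h2 hb
      have h5 := mul_le_mul_of_nonneg_left hP hc
      refine (add_le_add (add_le_add h3 h4) ((mul_one c).symm.le.trans h5)).trans (le_of_eq ?_)
      push_cast
      ring

/-- Bound for the two-dimensional linear recurrence
`μ_{i,j} = a·μ_{i−1,j} + b·μ_{i,j−1} + c` with `a = 1 + h₁a₁`, `b = h₁b₁`, `c = h₁·h·c₁`
and zero boundary values: under `h₁ ≤ h₂` one has
`μ_{i,j} ≤ h·X·c₁·exp((X+Y)b₁ + X·a₁)`. -/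
theorem mu_recurrence_bound (X Y : ℝ) (hX : 0 < X) (hY : 0 < Y)
    (N₁ N₂ : ℕ) (hN₁ : 1 ≤ N₁) (hN₂ : 1 ≤ N₂)
    (hh : X / N₁ ≤ Y / N₂)
    (a₁ b₁ c₁ : ℝ) (ha₁ : 0 ≤ a₁) (hb₁ : 0 ≤ b₁) (hc₁ : 0 ≤ c₁)
    (μ : ℕ → ℕ → ℝ)
    (hμ0 : ∀ j ≤ N₂, μ 0 j = 0) (hμ0' : ∀ i ≤ N₁, μ i 0 = 0)
    (hrec : ∀ i j : ℕ, 1 ≤ i → i ≤ N₁ → 1 ≤ j → j ≤ N₂ →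
      μ i j = (1 + (X / N₁) * a₁) * μ (i - 1) j + ((X / N₁) * b₁) * μ i (j - 1)
        + (X / N₁) * Real.sqrt ((X / N₁) ^ 2 + (Y / N₂) ^ 2) * c₁) :
    ∀ i ∈ Finset.Icc 1 N₁, ∀ j ∈ Finset.Icc 1 N₂,
      μ i j ≤ Real.sqrt ((X / N₁) ^ 2 + (Y / N₂) ^ 2) * X * c₁ *
        Real.exp ((X + Y) * b₁ + X * a₁) := by
  intro i hi j hj
  rw [Finset.mem_Icc] at hi hj
  have hn1 : (0 : ℝ) < N₁ := by exact_mod_cast hN₁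
  have hn2 : (0 : ℝ) < N₂ := by exact_mod_cast hN₂
  set k : ℝ := X / N₁ with hk
  set h : ℝ := Real.sqrt (k ^ 2 + (Y / N₂) ^ 2) with hh'
  have hk0 : 0 < k := by positivity
  have hh0 : 0 ≤ h := Real.sqrt_nonneg _
  have hkX : k * N₁ = X := by rw [hk]; field_simp
  have hkY : k * N₂ ≤ Y := by rwa [le_div_iff₀ hn2] at hh
  have key := mu_aux (1 + k * a₁) (k * b₁) (k * h * c₁)
    (by nlinarith [mul_nonneg hk0.le ha₁]) (by positivity) (by positivity)
    N₁ N₂ μ hμ0 hμ0' hrec i hi.2 j hj.2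
  have hiN : (i : ℝ) ≤ N₁ := by exact_mod_cast hi.2
  have hjN : (j : ℝ) ≤ N₂ := by exact_mod_cast hj.2
  have e1 : 1 + k * a₁ ≤ Real.exp (k * a₁) := by linarith [Real.add_one_le_exp (k * a₁)]
  have e2 : 1 + k * b₁ ≤ Real.exp (k * b₁) := by linarith [Real.add_one_le_exp (k * b₁)]
  have hE : ((1 + k * a₁) * (1 + k * b₁)) ^ i * (1 + k * b₁) ^ j
      ≤ Real.exp ((X + Y) * b₁ + X * a₁) := by
    calc _ ≤ (Real.exp (k * a₁) * Real.exp (k * b₁)) ^ i * Real.exp (k * b₁) ^ j := by gcongr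
      _ = Real.exp ((k * i + k * j) * b₁ + (k * i) * a₁) := by
        rw [← Real.exp_add, ← Real.exp_nat_mul, ← Real.exp_nat_mul, ← Real.exp_add]
        congr 1; ring
      _ ≤ _ := by
        have hiX : k * i ≤ X := by rw [← hkX]; gcongr
        have hjY : k * j ≤ Y := le_trans (by gcongr) hkY
        gcongr
  calc μ i j ≤ _ := key
    _ ≤ k * h * c₁ * (N₁ * Real.exp ((X + Y) * b₁ + X * a₁)) := by gcongr
    _ = h * (k * N₁) * c₁ * Real.exp ((X + Y) * b₁ + X * a₁) := by ring
    _ = _ := by rw [hkX]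
end

section
/- Let a, b, c be real numbers and let N₁, N₂ ≥ 1 be integers. Define μ_{i,j} for i ∈ {0,…,N₁}, j ∈ {0,…,N₂} by μ_{0,j} = 0 for j ∈ {0,…,N₂}, μ_{i,0} = 0 for i ∈ {0,…,N₁}, and μ_{i,j} = a·μ_{i−1,j} + b·μ_{i,j−1} + c for i, j ≥ 1. Then for all i ∈ {1,…,N₁} and j ∈ {1,…,N₂}: μ_{i,j} = c · Σ_{k=0}^{j−1} Σ_{p=0}^{i−1} ((k+p)!/(k!·p!)) · a^p · b^k. -/
lemma row_aux (a b : ℝ) (j i : ℕ) :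
    ∑ p ∈ Finset.range (i+1), (((j + 1 + p).choose (j+1) : ℕ) : ℝ) * a ^ p * b ^ (j+1)
      = a * ∑ p ∈ Finset.range i, (((j + 1 + p).choose (j+1) : ℕ) : ℝ) * a ^ p * b ^ (j+1)
      + b * ∑ p ∈ Finset.range (i+1), (((j + p).choose j : ℕ) : ℝ) * a ^ p * b ^ j := by
  induction i with
  | zero => simp [pow_succ, mul_comm]
  | succ i ih =>
    have h : (j + 1 + (i + 1)).choose (j+1)
        = (j + (i + 1)).choose j + (j + 1 + i).choose (j+1) := by
      have e : j + 1 + (i + 1) = (j + (i + 1)) + 1 := by omega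
      have e' : j + 1 + i = j + (i + 1) := by omega
      rw [e, e', Nat.choose_succ_succ]
    simp only [Finset.sum_range_succ] at ih ⊢
    rw [h]
    push_cast
    linear_combination ih

lemma sum_aux (a b : ℝ) (i j : ℕ) :
    ∑ k ∈ Finset.range (j+1), ∑ p ∈ Finset.range (i+1),
        (((k + p).choose k : ℕ) : ℝ) * a ^ p * b ^ k
      = a * (∑ k ∈ Finset.range (j+1), ∑ p ∈ Finset.range i,
        (((k + p).choose k : ℕ) : ℝ) * a ^ p * b ^ k)
      + b * (∑ k ∈ Finset.range j, ∑ p ∈ Finset.range (i+1),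
        (((k + p).choose k : ℕ) : ℝ) * a ^ p * b ^ k) + 1 := by
  induction j with
  | zero => simp [Finset.sum_range_succ', pow_succ, Finset.mul_sum, mul_comm]
  | succ j ih =>
    have h := fun m n : ℕ => Finset.sum_range_succ (fun k => ∑ p ∈ Finset.range m,
        (((k + p).choose k : ℕ) : ℝ) * a ^ p * b ^ k) n
    rw [h (i+1) (j+1), h i (j+1)]
    linear_combination ih + row_aux a b j i - b * h (i+1) j

/-- Explicit solution formula for the two-dimensional linear recurrence
`μ_{i,j} = a·μ_{i−1,j} + b·μ_{i,j−1} + c` with zero boundary values: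
`μ_{i,j} = c·Σ_{k=0}^{j−1} Σ_{p=0}^{i−1} C(k+p,k)·aᵖ·bᵏ`. -/
theorem mu_recurrence_explicit (a b c : ℝ) (N₁ N₂ : ℕ) (hN₁ : 1 ≤ N₁) (hN₂ : 1 ≤ N₂)
    (μ : ℕ → ℕ → ℝ)
    (hμ0 : ∀ j ≤ N₂, μ 0 j = 0) (hμ0' : ∀ i ≤ N₁, μ i 0 = 0)
    (hrec : ∀ i j : ℕ, 1 ≤ i → i ≤ N₁ → 1 ≤ j → j ≤ N₂ →
      μ i j = a * μ (i - 1) j + b * μ i (j - 1) + c) :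
    ∀ i ∈ Finset.Icc 1 N₁, ∀ j ∈ Finset.Icc 1 N₂,
      μ i j = c * ∑ k ∈ Finset.range j, ∑ p ∈ Finset.range i,
        (((k + p).choose k : ℕ) : ℝ) * a ^ p * b ^ k := by
  have key : ∀ i j : ℕ, i ≤ N₁ → j ≤ N₂ →
      μ i j = c * ∑ k ∈ Finset.range j, ∑ p ∈ Finset.range i,
        (((k + p).choose k : ℕ) : ℝ) * a ^ p * b ^ k := by
    intro i
    induction i with
    | zero => intro j _ hj; simp [hμ0 j hj]
    | succ i ihi =>
      intro j
      induction j with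
      | zero => intro hi _; simp [hμ0' _ hi]
      | succ j ihj =>
        intro hi hj
        rw [hrec (i+1) (j+1) (by omega) hi (by omega) hj, Nat.add_sub_cancel, Nat.add_sub_cancel,
          ihi (j+1) (by omega) hj, ihj hi (by omega), sum_aux]
        ring
  intro i hi j hj
  exact key i j (Finset.mem_Icc.1 hi).2 (Finset.mem_Icc.1 hj).2
end

section
/- Let s ≥ 0 and let w₀, …, w_s be continuous functions on D̄ that are continuously differentiable on each open mesh cell P_{i,j} with bounded first partial derivatives, and let w_{r,⊥} denote the lower-left sampling of w_r. Then sup_{(x,y) ∈ D̄} | A_s(N; w_{0,⊥}(x,y), …, w_{s,⊥}(x,y)) − A_s(N; w₀(x,y), …, w_s(x,y)) | ≤ h · A_s(Ñ₁; ‖w₀‖_{1,D̄}, …, ‖w_s‖_{1,D̄}), where Ñ₁(u) = Ñ′(u)·u. -/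
open Set

noncomputable section

/-- The Adomian polynomial `Aₙ(g; v₀,…,vₙ) = (1/n!)·(dⁿ/dτⁿ)[g(Σ_{s=0}^n v_s τ^s)]|_{τ=0}`. -/
def adomian (g : ℝ → ℝ) (n : ℕ) (v : ℕ → ℝ) : ℝ :=
  ((n.factorial : ℝ))⁻¹ *
    iteratedDeriv n (fun τ => g (∑ s ∈ Finset.range (n + 1), v s * τ ^ s)) 0

/-- The lower-left sampling `w_⊥` of a function `w` on `D̄`: `w_⊥(x,y) = w(x_{i−1}, y_{j−1})`
for `(x,y) ∈ [x_{i−1}, x_i) × [y_{j−1}, y_j)`, extended to the top/right edges from the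
last cells. -/
def sampling (X Y : ℝ) (N₁ N₂ : ℕ) (w : ℝ × ℝ → ℝ) (p : ℝ × ℝ) : ℝ :=
  w ((X / N₁) * ((min (N₁ - 1) ⌊p.1 / (X / N₁)⌋₊ : ℕ) : ℝ),
     (Y / N₂) * ((min (N₂ - 1) ⌊p.2 / (Y / N₂)⌋₊ : ℕ) : ℝ))

/-- The norm `‖g‖_{1,D̄} = max{ sup_{D̄}|g|,
max_{i,j} √((sup_{P_{i,j}}|∂g/∂x|)² + (sup_{P_{i,j}}|∂g/∂y|)²) }`. -/
def norm1 (X Y : ℝ) (N₁ N₂ : ℕ) (g : ℝ × ℝ → ℝ) : ℝ :=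
  max (⨆ p ∈ clD X Y, |g p|)
    (⨆ i ∈ Finset.Icc 1 N₁, ⨆ j ∈ Finset.Icc 1 N₂,
      Real.sqrt ((⨆ p ∈ cellOp X Y N₁ N₂ i j, |pdx g p|) ^ 2 +
        (⨆ p ∈ cellOp X Y N₁ N₂ i j, |pdy g p|) ^ 2))


/-! ### Power series and Adomian polynomials -/

open Polynomial in
/-- The polynomial `∑ v_r τ^r`. -/
def vPoly (n : ℕ) (v : ℕ → ℝ) : ℝ[X] := ∑ r ∈ Finset.range (n + 1), C (v r) * X ^ r

lemma vPoly_eval (n : ℕ) (v : ℕ → ℝ) (t : ℝ) :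
    (vPoly n v).eval t = ∑ r ∈ Finset.range (n + 1), v r * t ^ r := by
  simp [vPoly, Polynomial.eval_finsetSum]

lemma vPoly_coeff (n : ℕ) (v : ℕ → ℝ) (m : ℕ) :
    (vPoly n v).coeff m = if m ≤ n then v m else 0 := by
  simp [vPoly, Polynomial.coeff_X_pow]

/-- Coefficientwise majorization. -/
def Maj (A B : Polynomial ℝ) : Prop := ∀ n, |A.coeff n| ≤ B.coeff n

lemma Maj.nonneg {A B : Polynomial ℝ} (h : Maj A B) (n : ℕ) : 0 ≤ B.coeff n :=
  (abs_nonneg _).trans (h n)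

lemma Maj.add {A B A' B' : Polynomial ℝ} (h : Maj A B) (h' : Maj A' B') :
    Maj (A + A') (B + B') := fun n => by
  rw [Polynomial.coeff_add, Polynomial.coeff_add]
  exact (abs_add_le _ _).trans (add_le_add (h n) (h' n))

lemma Maj.mul {A B A' B' : Polynomial ℝ} (h : Maj A B) (h' : Maj A' B') :
    Maj (A * A') (B * B') := fun n => by
  rw [Polynomial.coeff_mul, Polynomial.coeff_mul]
  refine (Finset.abs_sum_le_sum_abs _ _).trans (Finset.sum_le_sum fun x _ => ?_)
  rw [abs_mul]
  exact mul_le_mul (h _) (h' _) (abs_nonneg _) (h.nonneg _)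

lemma Maj.pow {A B : Polynomial ℝ} (h : Maj A B) (k : ℕ) : Maj (A ^ k) (B ^ k) := by
  induction k with
  | zero =>
    intro n
    simp only [pow_zero, Polynomial.coeff_one]
    split_ifs <;> simp
  | succ k ih => rw [pow_succ, pow_succ]; exact ih.mul h

lemma Maj.pow_sub {P Q R : Polynomial ℝ} {h : ℝ} (hP : Maj P R) (hQ : Maj Q R)
    (hd : Maj (P - Q) (Polynomial.C h * R)) (k : ℕ) :
    Maj (P ^ k - Q ^ k) (Polynomial.C (h * k) * R ^ k) := by
  induction k with
  | zero => intro n; simp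
  | succ k ih =>
    have e1 : P ^ (k + 1) - Q ^ (k + 1) = P ^ k * (P - Q) + (P ^ k - Q ^ k) * Q := by ring
    have e2 : Polynomial.C (h * ((k + 1 : ℕ) : ℝ)) * R ^ (k + 1) =
        R ^ k * (Polynomial.C h * R) + (Polynomial.C (h * k) * R ^ k) * R := by
      push_cast
      simp only [mul_add, mul_one, map_add, map_mul]
      ring
    rw [e1, e2]
    exact ((hP.pow k).mul hd).add (ih.mul hQ)

lemma summable_abs_coeff {a : ℕ → ℝ} {g : ℝ → ℝ}
    (hg : ∀ v : ℝ, HasSum (fun k : ℕ => a k * v ^ k) (g v)) (v : ℝ) :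
    Summable (fun k : ℕ => |a k| * |v| ^ k) := by
  have := (hg v).summable.abs
  simpa [abs_mul] using this

lemma iteratedDeriv_of_hasSum {b : ℕ → ℝ} {f : ℝ → ℝ}
    (hf : ∀ t : ℝ, HasSum (fun m : ℕ => b m * t ^ m) (f t)) (n : ℕ) :
    iteratedDeriv n f 0 = n.factorial * b n := by
  have hp : HasFPowerSeriesOnBall f (FormalMultilinearSeries.ofScalars ℝ b) 0 ⊤ := by
    refine ⟨?_, by simp, ?_⟩
    · rw [FormalMultilinearSeries.radius_eq_top_of_summable_norm]
      intro r
      have := summable_abs_coeff hf r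
      simpa [FormalMultilinearSeries.ofScalars_norm] using this
    · intro y _
      simpa [FormalMultilinearSeries.ofScalars_apply_eq, mul_comm] using hf y
  have h1 := hp.hasFPowerSeriesAt
  have h2 := (hp.analyticAt).hasFPowerSeriesAt
  have h3 := h1.eq_formalMultilinearSeries h2
  have h4 := congrArg (fun p => p.coeff n) h3
  simp only [FormalMultilinearSeries.coeff_ofScalars] at h4
  rw [h4]
  field_simp

lemma hasSum_poly (P : Polynomial ℝ) (t : ℝ) :
    HasSum (fun m => P.coeff m * t ^ m) (P.eval t) := by
  rw [Polynomial.eval_eq_sum_range]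
  refine hasSum_sum_of_ne_finset_zero fun m hm => ?_
  rw [Polynomial.coeff_eq_zero_of_natDegree_lt (by simpa using hm), zero_mul]

lemma hasSum_adomian {a : ℕ → ℝ} {g : ℝ → ℝ}
    (hg : ∀ v : ℝ, HasSum (fun k : ℕ => a k * v ^ k) (g v)) (n : ℕ) (v : ℕ → ℝ) :
    HasSum (fun k => a k * ((vPoly n v) ^ k).coeff n) (adomian g n v) := by
  set P := vPoly n v with hP
  set R := vPoly n (fun r => |v r|) with hR
  have hPR : Maj P R := by
    intro m
    rw [hP, hR, vPoly_coeff, vPoly_coeff]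
    split_ifs <;> simp
  have hR0 : ∀ t : ℝ, 0 ≤ t → 0 ≤ R.eval t := by
    intro t ht
    rw [hR, vPoly_eval]
    exact Finset.sum_nonneg fun r _ => by positivity
  have hsum : ∀ t : ℝ, Summable (fun q : ℕ × ℕ => a q.1 * ((P ^ q.1).coeff q.2 * t ^ q.2)) := by
    intro t
    refine Summable.of_norm_bounded
      (g := fun q : ℕ × ℕ => |a q.1| * ((R ^ q.1).coeff q.2 * |t| ^ q.2)) ?_ ?_
    · have hk : ∀ k, HasSum (fun m => |a k| * ((R ^ k).coeff m * |t| ^ m))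
          (|a k| * (R.eval |t|) ^ k) := fun k => by
        have := (hasSum_poly (R ^ k) |t|).mul_left |a k|
        simpa using this
      rw [summable_prod_of_nonneg]
      · refine ⟨fun k => (hk k).summable, ?_⟩
        simp only [fun k => (hk k).tsum_eq]
        have := summable_abs_coeff hg (R.eval |t|)
        rwa [abs_of_nonneg (hR0 _ (abs_nonneg t))] at this
      · intro q
        have := (hPR.pow q.1).nonneg q.2
        simp only [Pi.zero_apply]
        positivity
    · intro q
      rw [Real.norm_eq_abs, abs_mul, abs_mul, abs_pow]
      have := hPR.pow q.1 q.2
      gcongr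
  have hcol : ∀ m, Summable (fun k => a k * (P ^ k).coeff m) := by
    intro m
    have := ((hsum 1).prod_symm).prod_factor m
    simpa using this
  have hser : ∀ t : ℝ, HasSum (fun m => (∑' k, a k * (P ^ k).coeff m) * t ^ m)
      (g (∑ r ∈ Finset.range (n + 1), v r * t ^ r)) := by
    intro t
    have h1 := (hsum t).hasSum
    have h2 := h1.prod_fiberwise (g := fun k => a k * (P.eval t) ^ k) (fun k => by
      have := (hasSum_poly (P ^ k) t).mul_left (a k)
      simpa using this)
    have h3 := h2.unique (hg (P.eval t))
    rw [h3] at h1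
    have h4 : HasSum (fun q : ℕ × ℕ => a q.2 * ((P ^ q.2).coeff q.1 * t ^ q.1)) (g (P.eval t)) :=
      (Equiv.prodComm ℕ ℕ).hasSum_iff.mpr h1
    rw [← vPoly_eval]
    refine h4.prod_fiberwise fun m => ?_
    have := ((hcol m).hasSum).mul_right (t ^ m)
    simpa [mul_assoc] using this
  have := iteratedDeriv_of_hasSum hser n
  have hval : adomian g n v = ∑' k, a k * (P ^ k).coeff n := by
    rw [adomian, this]
    have : (n.factorial : ℝ) ≠ 0 := by positivity
    field_simp
  rw [hval]
  exact (hcol n).hasSum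

lemma hasSum_deriv_mul {a : ℕ → ℝ} {g : ℝ → ℝ}
    (hg : ∀ v : ℝ, HasSum (fun k : ℕ => a k * v ^ k) (g v)) (v : ℝ) :
    HasSum (fun k : ℕ => (k * a k) * v ^ k) (deriv g v * v) := by
  set R := |v| + 1 with hR
  have hR1 : 1 ≤ R := by rw [hR]; linarith [abs_nonneg v]
  have hu : Summable (fun k : ℕ => |a k| * (2 * R) ^ k) := by
    have := summable_abs_coeff hg (2 * R)
    rwa [abs_of_nonneg (by linarith)] at this
  have hbd : ∀ (k : ℕ) (y : ℝ), y ∈ Metric.ball (0 : ℝ) R →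
      ‖a k * (k * y ^ (k - 1))‖ ≤ |a k| * (2 * R) ^ k := by
    intro k y hy
    have hy' : |y| ≤ R := by simpa using (Metric.mem_ball.mp hy).le
    rw [Real.norm_eq_abs, abs_mul, abs_mul, abs_pow, mul_pow, Nat.abs_cast]
    have h1 : (k : ℝ) ≤ 2 ^ k := by exact_mod_cast (Nat.lt_two_pow_self).le
    have h2 : |y| ^ (k - 1) ≤ R ^ k :=
      (pow_le_pow_left₀ (abs_nonneg y) hy' _).trans (pow_le_pow_right₀ hR1 (Nat.sub_le _ _))
    gcongr
  have hv : v ∈ Metric.ball (0 : ℝ) R := by simp [hR]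
  have hD := hasDerivAt_tsum_of_isPreconnected (g := fun k z => a k * z ^ k)
    (g' := fun k y => a k * (k * y ^ (k - 1))) hu Metric.isOpen_ball
    (convex_ball (0 : ℝ) R).isPreconnected
    (fun k y _ => (hasDerivAt_pow k y).const_mul (a k)) hbd hv (hg v).summable hv
  have hgf : (fun z => ∑' k, a k * z ^ k) = g := funext fun z => (hg z).tsum_eq
  rw [hgf] at hD
  rw [hD.deriv]
  have hs : Summable (fun k : ℕ => a k * (k * v ^ (k - 1))) :=
    Summable.of_norm_bounded hu fun k => hbd k v hv
  have := hs.hasSum.mul_right v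
  refine this.congr_fun ?_
  intro k
  rcases k with _ | k
  · simp
  · simp only [Nat.add_sub_cancel, pow_succ]
    ring

/-! ### Sampling -/

lemma le_biSup_real {α : Type*} {S : α → Prop} {f : α → ℝ} {M : ℝ}
    (hM : ∀ p, S p → f p ≤ M) {p : α} (hp : S p) : f p ≤ ⨆ p, ⨆ _ : S p, f p := by
  have hb : BddAbove (range fun p => ⨆ _ : S p, f p) := by
    refine ⟨max M 0, ?_⟩
    rintro _ ⟨q, rfl⟩
    by_cases hq : S q
    · simp only [ciSup_pos hq]
      exact (hM q hq).trans (le_max_left _ _)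
    · haveI : IsEmpty (S q) := ⟨hq⟩
      simp only [Real.iSup_of_isEmpty]
      exact le_max_right _ _
  refine le_ciSup_of_le hb p ?_
  rw [ciSup_pos hp]

lemma le_biSup_finset {f : ℕ → ℝ} {T : Finset ℕ} {i : ℕ} (hi : i ∈ T) :
    f i ≤ ⨆ i ∈ T, f i :=
  le_biSup_real (S := fun i => i ∈ T) (M := ∑ k ∈ T, |f k|) (fun k hk =>
    (le_abs_self _).trans
      (Finset.single_le_sum (f := fun k => |f k|) (fun _ _ => abs_nonneg _) hk)) hi

lemma le_biSup_image {f : ℝ × ℝ → ℝ} {S : Set (ℝ × ℝ)} (hb : BddAbove (f '' S)) {p : ℝ × ℝ}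
    (hp : p ∈ S) : f p ≤ ⨆ p ∈ S, f p := by
  obtain ⟨M, hM⟩ := hb
  exact le_biSup_real (S := fun p => p ∈ S) (M := M) (fun q hq => hM ⟨q, hq, rfl⟩) hp

lemma abs_le_norm1 {X Y : ℝ} {N₁ N₂ : ℕ} {g : ℝ × ℝ → ℝ} (hg : ContinuousOn g (clD X Y))
    {p : ℝ × ℝ} (hp : p ∈ clD X Y) : |g p| ≤ norm1 X Y N₁ N₂ g := by
  refine le_trans ?_ (le_max_left _ _)
  have hc : IsCompact (clD X Y) := isCompact_Icc.prod isCompact_Icc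
  exact le_biSup_image (f := fun p => |g p|) (hc.bddAbove_image hg.abs) hp

lemma rect_lipschitz {a b c d Mx My : ℝ} (hab : a < b) (hcd : c < d) {g : ℝ × ℝ → ℝ}
    (hg : ContinuousOn g (Icc a b ×ˢ Icc c d))
    (hdx : ∀ p ∈ Ioo a b ×ˢ Ioo c d, DifferentiableAt ℝ (fun t => g (t, p.2)) p.1)
    (hdy : ∀ p ∈ Ioo a b ×ˢ Ioo c d, DifferentiableAt ℝ (fun t => g (p.1, t)) p.2)
    (hbx : ∀ p ∈ Ioo a b ×ˢ Ioo c d, |pdx g p| ≤ Mx)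
    (hby : ∀ p ∈ Ioo a b ×ˢ Ioo c d, |pdy g p| ≤ My)
    {p q : ℝ × ℝ} (hp : p ∈ Icc a b ×ˢ Icc c d) (hq : q ∈ Icc a b ×ˢ Icc c d) :
    |g p - g q| ≤ Mx * |p.1 - q.1| + My * |p.2 - q.2| := by
  have hcl : closure (Ioo a b ×ˢ Ioo c d) = Icc a b ×ˢ Icc c d := by
    rw [closure_prod_eq, closure_Ioo hab.ne, closure_Ioo hcd.ne]
  have hop : ∀ z ∈ (Ioo a b ×ˢ Ioo c d) ×ˢ (Ioo a b ×ˢ Ioo c d),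
      |g z.1 - g z.2| ≤ Mx * |z.1.1 - z.2.1| + My * |z.1.2 - z.2.2| := by
    rintro ⟨⟨x, y⟩, ⟨x', y'⟩⟩ ⟨⟨hx, hy⟩, ⟨hx', hy'⟩⟩
    simp only at hx hy hx' hy' ⊢
    have h1 : |g (x, y) - g (x', y)| ≤ Mx * |x - x'| :=
      (convex_Ioo a b).norm_image_sub_le_of_norm_deriv_le (f := fun t => g (t, y))
        (fun t ht => hdx (t, y) ⟨ht, hy⟩) (fun t ht => hbx (t, y) ⟨ht, hy⟩) hx' hx
    have h2 : |g (x', y) - g (x', y')| ≤ My * |y - y'| :=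
      (convex_Ioo c d).norm_image_sub_le_of_norm_deriv_le (f := fun t => g (x', t))
        (fun t ht => hdy (x', t) ⟨hx', ht⟩) (fun t ht => hby (x', t) ⟨hx', ht⟩) hy' hy
    exact (abs_sub_le _ (g (x', y)) _).trans (add_le_add h1 h2)
  have hcl2 : closure ((Ioo a b ×ˢ Ioo c d) ×ˢ (Ioo a b ×ˢ Ioo c d)) =
      (Icc a b ×ˢ Icc c d) ×ˢ (Icc a b ×ˢ Icc c d) := by
    rw [closure_prod_eq, hcl]
  refine le_on_closure (f := fun z : (ℝ × ℝ) × (ℝ × ℝ) => |g z.1 - g z.2|)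
    (g := fun z => Mx * |z.1.1 - z.2.1| + My * |z.1.2 - z.2.2|) hop ?_ ?_
    (x := (p, q)) ?_
  · rw [hcl2]
    refine ContinuousOn.abs (ContinuousOn.sub ?_ ?_)
    · exact hg.comp continuousOn_fst fun z hz => hz.1
    · exact hg.comp continuousOn_snd fun z hz => hz.2
  · exact Continuous.continuousOn (by fun_prop)
  · rw [hcl2]
    exact ⟨hp, hq⟩

lemma mesh_index {X : ℝ} (hX : 0 < X) {N : ℕ} (hN : 1 ≤ N) {x : ℝ} (hx : x ∈ Icc 0 X) :
    ∃ i ∈ Finset.Icc 1 N, x ∈ Icc (((i : ℝ) - 1) * (X / N)) ((i : ℝ) * (X / N)) ∧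
      (X / N) * ((min (N - 1) ⌊x / (X / N)⌋₊ : ℕ) : ℝ) = ((i : ℝ) - 1) * (X / N) := by
  have hN0 : (0 : ℝ) < N := by exact_mod_cast hN
  have hh : 0 < X / N := by positivity
  refine ⟨min (N - 1) ⌊x / (X / N)⌋₊ + 1, ?_, ⟨?_, ?_⟩, ?_⟩
  · rw [Finset.mem_Icc]
    have := min_le_left (N - 1) ⌊x / (X / N)⌋₊
    omega
  · rw [Nat.cast_add_one, add_sub_cancel_right, ← le_div_iff₀ hh]
    refine le_trans ?_ (Nat.floor_le (div_nonneg hx.1 hh.le))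
    exact_mod_cast min_le_right _ _
  · rcases min_choice (N - 1) ⌊x / (X / N)⌋₊ with h | h
    · rw [h, Nat.sub_add_cancel hN]
      refine hx.2.trans (le_of_eq ?_)
      field_simp
    · rw [h, ← div_le_iff₀ hh]
      exact_mod_cast (Nat.lt_floor_add_one _).le
  · push_cast
    ring

lemma cell_subset {X : ℝ} (hX : 0 < X) {N : ℕ} {i : ℕ} (hi : i ∈ Finset.Icc 1 N) :
    Icc (((i : ℝ) - 1) * (X / N)) ((i : ℝ) * (X / N)) ⊆ Icc 0 X := by
  rw [Finset.mem_Icc] at hi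
  have h1 : (1 : ℝ) ≤ i := by exact_mod_cast hi.1
  have h2 : (i : ℝ) ≤ N := by exact_mod_cast hi.2
  have hN0 : (0 : ℝ) < N := by linarith
  have hh : 0 < X / N := by positivity
  apply Icc_subset_Icc
  · exact mul_nonneg (by linarith) hh.le
  · calc (i : ℝ) * (X / N) ≤ N * (X / N) := by gcongr
      _ = X := by field_simp

lemma sampling_estimate (X Y : ℝ) (hX : 0 < X) (hY : 0 < Y)
    (N₁ N₂ : ℕ) (hN₁ : 1 ≤ N₁) (hN₂ : 1 ≤ N₂) (g : ℝ × ℝ → ℝ)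
    (hwc : ContinuousOn g (clD X Y))
    (hwdx : ∀ i ∈ Finset.Icc 1 N₁, ∀ j ∈ Finset.Icc 1 N₂,
      ∀ p ∈ cellOp X Y N₁ N₂ i j, DifferentiableAt ℝ (fun t => g (t, p.2)) p.1)
    (hwdy : ∀ i ∈ Finset.Icc 1 N₁, ∀ j ∈ Finset.Icc 1 N₂,
      ∀ p ∈ cellOp X Y N₁ N₂ i j, DifferentiableAt ℝ (fun t => g (p.1, t)) p.2)
    (hwbx : ∀ i ∈ Finset.Icc 1 N₁, ∀ j ∈ Finset.Icc 1 N₂,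
      BddAbove ((fun p => |pdx g p|) '' cellOp X Y N₁ N₂ i j))
    (hwby : ∀ i ∈ Finset.Icc 1 N₁, ∀ j ∈ Finset.Icc 1 N₂,
      BddAbove ((fun p => |pdy g p|) '' cellOp X Y N₁ N₂ i j))
    (p : ℝ × ℝ) (hp : p ∈ clD X Y) :
    |sampling X Y N₁ N₂ g p| ≤ norm1 X Y N₁ N₂ g ∧
    |sampling X Y N₁ N₂ g p - g p| ≤ meshH X Y N₁ N₂ * norm1 X Y N₁ N₂ g := by
  obtain ⟨i, hi, hxi, hxe⟩ := mesh_index hX hN₁ hp.1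
  obtain ⟨j, hj, hyj, hye⟩ := mesh_index hY hN₂ hp.2
  have hN10 : (0 : ℝ) < N₁ := by exact_mod_cast hN₁
  have hN20 : (0 : ℝ) < N₂ := by exact_mod_cast hN₂
  have hh1 : 0 < X / N₁ := by positivity
  have hh2 : 0 < Y / N₂ := by positivity
  have hab : ((i : ℝ) - 1) * (X / N₁) < (i : ℝ) * (X / N₁) := by nlinarith
  have hcd : ((j : ℝ) - 1) * (Y / N₂) < (j : ℝ) * (Y / N₂) := by nlinarith
  have hsub : Icc (((i : ℝ) - 1) * (X / N₁)) ((i : ℝ) * (X / N₁)) ×ˢ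
      Icc (((j : ℝ) - 1) * (Y / N₂)) ((j : ℝ) * (Y / N₂)) ⊆ clD X Y :=
    prod_mono (cell_subset hX hi) (cell_subset hY hj)
  rw [sampling, hxe, hye]
  set q : ℝ × ℝ := (((i : ℝ) - 1) * (X / N₁), ((j : ℝ) - 1) * (Y / N₂)) with hq
  have hqm : q ∈ Icc (((i : ℝ) - 1) * (X / N₁)) ((i : ℝ) * (X / N₁)) ×ˢ
      Icc (((j : ℝ) - 1) * (Y / N₂)) ((j : ℝ) * (Y / N₂)) :=
    ⟨left_mem_Icc.mpr hab.le, left_mem_Icc.mpr hcd.le⟩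
  refine ⟨abs_le_norm1 hwc (hsub hqm), ?_⟩
  set Mx := ⨆ p ∈ cellOp X Y N₁ N₂ i j, |pdx g p| with hMx
  set My := ⨆ p ∈ cellOp X Y N₁ N₂ i j, |pdy g p| with hMy
  have hMx0 : 0 ≤ Mx := Real.iSup_nonneg fun _ => Real.iSup_nonneg fun _ => abs_nonneg _
  have hMy0 : 0 ≤ My := Real.iSup_nonneg fun _ => Real.iSup_nonneg fun _ => abs_nonneg _
  have hL := rect_lipschitz hab hcd (hwc.mono hsub) (hwdx i hi j hj) (hwdy i hi j hj)
    (Mx := Mx) (My := My)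
    (fun z hz => le_biSup_image (f := fun p => |pdx g p|) (hwbx i hi j hj) hz)
    (fun z hz => le_biSup_image (f := fun p => |pdy g p|) (hwby i hi j hj) hz)
    hqm (show p ∈ _ from ⟨hxi, hyj⟩)
  have hnorm : Real.sqrt (Mx ^ 2 + My ^ 2) ≤ norm1 X Y N₁ N₂ g := by
    refine le_trans ?_ (le_max_right _ _)
    refine le_trans ?_ (le_biSup_finset hi)
    exact le_biSup_finset (f := fun j => Real.sqrt
      ((⨆ p ∈ cellOp X Y N₁ N₂ i j, |pdx g p|) ^ 2 +
        (⨆ p ∈ cellOp X Y N₁ N₂ i j, |pdy g p|) ^ 2)) hj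
  have hd1 : |q.1 - p.1| ≤ X / N₁ := by
    rw [abs_le]
    constructor <;> simp only [hq] <;> linarith [hxi.1, hxi.2]
  have hd2 : |q.2 - p.2| ≤ Y / N₂ := by
    rw [abs_le]
    constructor <;> simp only [hq] <;> linarith [hyj.1, hyj.2]
  calc |g q - g p| ≤ Mx * |q.1 - p.1| + My * |q.2 - p.2| := hL
    _ ≤ Mx * (X / N₁) + My * (Y / N₂) := by gcongr
    _ ≤ meshH X Y N₁ N₂ * Real.sqrt (Mx ^ 2 + My ^ 2) := by
      rw [meshH, ← Real.sqrt_mul (by positivity)]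
      apply Real.le_sqrt_of_sq_le
      nlinarith [sq_nonneg (Mx * (Y / N₂) - My * (X / N₁))]
    _ ≤ meshH X Y N₁ N₂ * norm1 X Y N₁ N₂ g :=
      mul_le_mul_of_nonneg_left hnorm (Real.sqrt_nonneg _)

/-- Lipschitz-type estimate for Adomian polynomials under lower-left
sampling: for continuous functions `w₀,…,w_s` on `D̄`, continuously differentiable with
bounded first partials on each open mesh cell,
`|A_s(N; w₀,⊥,…,w_s,⊥) − A_s(N; w₀,…,w_s)| ≤ h·A_s(Ñ₁; ‖w₀‖₁,…,‖w_s‖₁)` on `D̄`,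
where `Ñ₁(u) = Ñ′(u)·u` and `Ñ(u) = Σ |ν_s| u^s`. -/
theorem adomian_sampling_estimate (X Y : ℝ) (hX : 0 < X) (hY : 0 < Y)
    (N₁ N₂ : ℕ) (hN₁ : 1 ≤ N₁) (hN₂ : 1 ≤ N₂)
    (ν : ℕ → ℝ) (N Ntil : ℝ → ℝ)
    (hN : ∀ v : ℝ, HasSum (fun s : ℕ => ν s * v ^ s) (N v))
    (hNtil : ∀ v : ℝ, HasSum (fun s : ℕ => |ν s| * v ^ s) (Ntil v))
    (s : ℕ) (w : ℕ → ℝ × ℝ → ℝ)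
    (hwc : ∀ r ≤ s, ContinuousOn (w r) (clD X Y))
    (hwdx : ∀ r ≤ s, ∀ i ∈ Finset.Icc 1 N₁, ∀ j ∈ Finset.Icc 1 N₂,
      ∀ p ∈ cellOp X Y N₁ N₂ i j, DifferentiableAt ℝ (fun t => w r (t, p.2)) p.1)
    (hwdy : ∀ r ≤ s, ∀ i ∈ Finset.Icc 1 N₁, ∀ j ∈ Finset.Icc 1 N₂,
      ∀ p ∈ cellOp X Y N₁ N₂ i j, DifferentiableAt ℝ (fun t => w r (p.1, t)) p.2)
    (hwcx : ∀ r ≤ s, ∀ i ∈ Finset.Icc 1 N₁, ∀ j ∈ Finset.Icc 1 N₂,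
      ContinuousOn (pdx (w r)) (cellOp X Y N₁ N₂ i j))
    (hwcy : ∀ r ≤ s, ∀ i ∈ Finset.Icc 1 N₁, ∀ j ∈ Finset.Icc 1 N₂,
      ContinuousOn (pdy (w r)) (cellOp X Y N₁ N₂ i j))
    (hwbx : ∀ r ≤ s, ∀ i ∈ Finset.Icc 1 N₁, ∀ j ∈ Finset.Icc 1 N₂,
      BddAbove ((fun p => |pdx (w r) p|) '' cellOp X Y N₁ N₂ i j))
    (hwby : ∀ r ≤ s, ∀ i ∈ Finset.Icc 1 N₁, ∀ j ∈ Finset.Icc 1 N₂,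
      BddAbove ((fun p => |pdy (w r) p|) '' cellOp X Y N₁ N₂ i j)) :
    ∀ p ∈ clD X Y,
      |adomian N s (fun r => sampling X Y N₁ N₂ (w r) p) -
          adomian N s (fun r => w r p)| ≤
        meshH X Y N₁ N₂ *
          adomian (fun v => deriv Ntil v * v) s (fun r => norm1 X Y N₁ N₂ (w r)) := by

  intro p hp
  have hS := fun r (hr : r ≤ s) => sampling_estimate X Y hX hY N₁ N₂ hN₁ hN₂ (w r) (hwc r hr)
    (hwdx r hr) (hwdy r hr) (hwbx r hr) (hwby r hr) p hp
  have h1 := hasSum_adomian hN s (fun r => sampling X Y N₁ N₂ (w r) p)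
  have h2 := hasSum_adomian hN s (fun r => w r p)
  have h3 := (hasSum_adomian (hasSum_deriv_mul hNtil) s
    (fun r => norm1 X Y N₁ N₂ (w r))).mul_left (meshH X Y N₁ N₂)
  set P := vPoly s (fun r => sampling X Y N₁ N₂ (w r) p) with hP
  set Q := vPoly s (fun r => w r p) with hQ
  set R := vPoly s (fun r => norm1 X Y N₁ N₂ (w r)) with hR
  have hPR : Maj P R := by
    intro m
    rw [hP, hR, vPoly_coeff, vPoly_coeff]
    split_ifs with hm
    · exact (hS m hm).1
    · simp
  have hQR : Maj Q R := by
    intro m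
    rw [hQ, hR, vPoly_coeff, vPoly_coeff]
    split_ifs with hm
    · exact abs_le_norm1 (hwc m hm) hp
    · simp
  have hd : Maj (P - Q) (Polynomial.C (meshH X Y N₁ N₂) * R) := by
    intro m
    rw [Polynomial.coeff_sub, Polynomial.coeff_C_mul, hP, hQ, hR, vPoly_coeff, vPoly_coeff,
      vPoly_coeff]
    split_ifs with hm
    · exact (hS m hm).2
    · simp
  have hle : ∀ k, ‖ν k * (P ^ k).coeff s - ν k * (Q ^ k).coeff s‖ ≤
      meshH X Y N₁ N₂ * (k * |ν k| * (R ^ k).coeff s) := by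
    intro k
    have := hPR.pow_sub hQR hd k s
    rw [Polynomial.coeff_sub, Polynomial.coeff_C_mul] at this
    rw [Real.norm_eq_abs, ← mul_sub, abs_mul]
    calc |ν k| * |(P ^ k).coeff s - (Q ^ k).coeff s|
        ≤ |ν k| * (meshH X Y N₁ N₂ * k * (R ^ k).coeff s) := by gcongr
      _ = _ := by ring
  have h12 := h1.sub h2
  rw [← h12.tsum_eq, ← h3.tsum_eq, ← Real.norm_eq_abs]
  exact tsum_of_norm_bounded h3.summable.hasSum hle
end
end

section
/- Let u solve the Goursat problem, with ∂u/∂x extending continuously to (0,X) × [0,Y) and ∂u/∂y extending continuously to [0,X) × (0,Y). Then for every (x,y) ∈ D: ∂u/∂x(x,y) = ψ′(x) + ∫₀^y [f(x,η) − N(u(x,η))·u(x,η)] dη and ∂u/∂y(x,y) = φ′(y) + ∫₀^x [f(ξ,y) − N(u(ξ,y))·u(ξ,y)] dξ. -/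
open Set

noncomputable section

/-- Mixed partial derivative `∂²u/∂y∂x` (derivative in `x` of the derivative in `y`). -/
def pdyx (u : ℝ × ℝ → ℝ) (p : ℝ × ℝ) : ℝ := pdx (pdy u) p

/-- Entire power series define continuous functions. -/
theorem goursat_aux_cont (ν : ℕ → ℝ) (N : ℝ → ℝ)
    (hN : ∀ v : ℝ, HasSum (fun s : ℕ => ν s * v ^ s) (N v)) : Continuous N := by
  have hE : N = fun v => ∑' s, ν s * v ^ s := by
    funext v; exact (hN v).tsum_eq.symm
  rw [continuous_iff_continuousAt]
  intro v
  have hc : ContinuousOn N (Metric.ball 0 (|v| + 1)) := by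
    rw [hE]
    refine continuousOn_tsum (u := fun s => |ν s * (|v| + 1) ^ s|)
      (fun s => by fun_prop) (hN (|v| + 1)).summable.abs ?_
    intro s x hx
    have hx' : |x| ≤ |v| + 1 := by
      have := Metric.mem_ball.1 hx
      rw [Real.dist_eq, sub_zero] at this
      exact this.le
    have h0 : 0 ≤ |v| + 1 := by positivity
    rw [Real.norm_eq_abs, abs_mul, abs_mul, abs_pow, abs_pow, abs_of_nonneg h0]
    gcongr
  refine hc.continuousAt (Metric.isOpen_ball.mem_nhds ?_)
  rw [Metric.mem_ball, Real.dist_eq, sub_zero]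
  linarith

/-- Double mean value theorem on a rectangle. -/
theorem goursat_aux_mvt (u : ℝ × ℝ → ℝ) (a b c d : ℝ) (hab : a < b) (hcd : c < d)
    (h1 : ∀ x ∈ Icc a b, ∀ y ∈ Icc c d, DifferentiableAt ℝ (fun t => u (t, y)) x)
    (h2 : ∀ x ∈ Icc a b, ∀ y ∈ Icc c d, DifferentiableAt ℝ (fun t => pdx u (x, t)) y) :
    ∃ x ∈ Icc a b, ∃ y ∈ Icc c d,
      u (b, d) - u (b, c) - u (a, d) + u (a, c) = (b - a) * (d - c) * pdxy u (x, y) := by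
  have hc : c ∈ Icc c d := ⟨le_rfl, hcd.le⟩
  have hd : d ∈ Icc c d := ⟨hcd.le, le_rfl⟩
  have hg : ∀ x ∈ Icc a b, HasDerivAt (fun t => u (t, d) - u (t, c))
      (pdx u (x, d) - pdx u (x, c)) x := fun x hx =>
    (h1 x hx d hd).hasDerivAt.sub (h1 x hx c hc).hasDerivAt
  obtain ⟨x, hx, hx'⟩ := exists_hasDerivAt_eq_slope (fun t => u (t, d) - u (t, c))
    (fun x => pdx u (x, d) - pdx u (x, c)) hab
    (fun x hx => (hg x hx).continuousAt.continuousWithinAt)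
    (fun x hx => hg x (Ioo_subset_Icc_self hx))
  have hx := Ioo_subset_Icc_self hx
  obtain ⟨y, hy, hy'⟩ := exists_hasDerivAt_eq_slope (fun t => pdx u (x, t))
    (fun y => pdxy u (x, y)) hcd
    (fun y hy => (h2 x hx y hy).continuousAt.continuousWithinAt)
    (fun y hy => (h2 x hx y (Ioo_subset_Icc_self hy)).hasDerivAt)
  refine ⟨x, hx, y, Ioo_subset_Icc_self hy, ?_⟩
  have e1 : b - a ≠ 0 := (sub_pos.2 hab).ne'
  have e2 : d - c ≠ 0 := (sub_pos.2 hcd).ne'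
  rw [eq_div_iff e1] at hx'
  rw [eq_div_iff e2] at hy'
  rw [← hy'] at hx'
  linarith

/-- Equality of the mixed derivatives when both are continuous. -/
theorem goursat_aux_symm (u : ℝ × ℝ → ℝ) (S : Set (ℝ × ℝ)) (hS : IsOpen S)
    (hx : ∀ p ∈ S, DifferentiableAt ℝ (fun t => u (t, p.2)) p.1)
    (hy : ∀ p ∈ S, DifferentiableAt ℝ (fun t => u (p.1, t)) p.2)
    (hxy : ∀ p ∈ S, DifferentiableAt ℝ (fun t => pdx u (p.1, t)) p.2)
    (hyx : ∀ p ∈ S, DifferentiableAt ℝ (fun t => pdy u (t, p.2)) p.1)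
    (cxy : ContinuousOn (pdxy u) S) (cyx : ContinuousOn (pdyx u) S) :
    ∀ p ∈ S, pdxy u p = pdyx u p := by
  rintro ⟨x0, y0⟩ hp
  by_contra hne
  have hpos : 0 < |pdxy u (x0, y0) - pdyx u (x0, y0)| := abs_pos.2 (sub_ne_zero.2 hne)
  set e := |pdxy u (x0, y0) - pdyx u (x0, y0)| with he
  have hSn := hS.mem_nhds hp
  obtain ⟨δ0, hδ0, H0⟩ := Metric.mem_nhds_iff.1 hSn
  obtain ⟨δ1, hδ1, H1⟩ := Metric.continuousAt_iff.1 (cxy.continuousAt hSn) (e / 2) (by positivity)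
  obtain ⟨δ2, hδ2, H2⟩ := Metric.continuousAt_iff.1 (cyx.continuousAt hSn) (e / 2) (by positivity)
  obtain ⟨δ, hδ, hl⟩ : ∃ δ, 0 < δ ∧ δ < min δ0 (min δ1 δ2) :=
    exists_between (by positivity)
  have l0 : δ < δ0 := hl.trans_le (min_le_left _ _)
  have l1 : δ < δ1 := hl.trans_le ((min_le_right _ _).trans (min_le_left _ _))
  have l2 : δ < δ2 := hl.trans_le ((min_le_right _ _).trans (min_le_right _ _))
  have hdist : ∀ x ∈ Icc x0 (x0 + δ), ∀ y ∈ Icc y0 (y0 + δ), dist (x, y) (x0, y0) ≤ δ := by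
    intro x hx y hy
    rw [Prod.dist_eq, Real.dist_eq, Real.dist_eq]
    refine max_le (abs_le.2 ⟨?_, ?_⟩) (abs_le.2 ⟨?_, ?_⟩) <;>
      simp only [] <;> linarith [hx.1, hx.2, hy.1, hy.2]
  have hmem : ∀ x ∈ Icc x0 (x0 + δ), ∀ y ∈ Icc y0 (y0 + δ), (x, y) ∈ S := fun x hx y hy =>
    H0 (Metric.mem_ball.2 ((hdist x hx y hy).trans_lt l0))
  obtain ⟨x, hx1, y, hy1, E1⟩ := goursat_aux_mvt u x0 (x0 + δ) y0 (y0 + δ)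
    (by linarith) (by linarith)
    (fun x h y k => hx _ (hmem x h y k)) (fun x h y k => hxy _ (hmem x h y k))
  obtain ⟨y', hy2, x', hx2, E2⟩ := goursat_aux_mvt (fun q => u (q.2, q.1)) y0 (y0 + δ) x0 (x0 + δ)
    (by linarith) (by linarith)
    (fun y k x h => hy _ (hmem x h y k)) (fun y k x h => hyx _ (hmem x h y k))
  have E2' : u (x0 + δ, y0 + δ) - u (x0, y0 + δ) - u (x0 + δ, y0) + u (x0, y0)
      = (y0 + δ - y0) * (x0 + δ - x0) * pdyx u (x', y') := E2
  have E : pdxy u (x, y) = pdyx u (x', y') := by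
    have h : δ * δ * pdxy u (x, y) = δ * δ * pdyx u (x', y') := by
      simp only [add_sub_cancel_left] at E1 E2'
      linarith
    exact mul_left_cancel₀ (by positivity) h
  have A1 := H1 ((hdist x hx1 y hy1).trans_lt l1)
  have A2 := H2 ((hdist x' hx2 y' hy2).trans_lt l2)
  rw [Real.dist_eq] at A1 A2
  rw [E] at A1
  rw [abs_sub_comm] at A1
  have := abs_sub_le (pdxy u (x0, y0)) (pdyx u (x', y')) (pdyx u (x0, y0))
  linarith

/-- Integral formulas for the first partial derivatives of the solution
of the Goursat problem:
`∂u/∂x(x,y) = ψ′(x) + ∫₀^y [f(x,η) − N(u(x,η))u(x,η)] dη` and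
`∂u/∂y(x,y) = φ′(y) + ∫₀^x [f(ξ,y) − N(u(ξ,y))u(ξ,y)] dξ`. -/
theorem goursat_first_derivative_formulas
    (X Y : ℝ) (hX : 0 < X) (hY : 0 < Y)
    (ν : ℕ → ℝ) (N : ℝ → ℝ)
    (hN : ∀ v : ℝ, HasSum (fun s : ℕ => ν s * v ^ s) (N v))
    (f : ℝ × ℝ → ℝ) (hf : ContinuousOn f (clD X Y))
    (ψ φ : ℝ → ℝ)
    (hψc : ContinuousOn ψ (Icc 0 X))
    (hψd : ∀ x ∈ Ioo (0 : ℝ) X, DifferentiableAt ℝ ψ x)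
    (hφc : ContinuousOn φ (Icc 0 Y))
    (hφd : ∀ y ∈ Ioo (0 : ℝ) Y, DifferentiableAt ℝ φ y)
    (hcomp : ψ 0 = φ 0)
    (u : ℝ × ℝ → ℝ) (hu : GoursatSol X Y N f ψ φ u)
    (hdiffyx : ∀ p ∈ opD X Y, DifferentiableAt ℝ (fun t => pdy u (t, p.2)) p.1)
    (hcontyx : ContinuousOn (pdyx u) (opD X Y))
    (hxext : ContinuousOn (pdx u) (Ioo 0 X ×ˢ Ico 0 Y))
    (hyext : ContinuousOn (pdy u) (Ico 0 X ×ˢ Ioo 0 Y)) :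
    ∀ p ∈ opD X Y,
      pdx u p = deriv ψ p.1 +
        ∫ η in (0 : ℝ)..p.2, (f (p.1, η) - N (u (p.1, η)) * u (p.1, η)) ∧
      pdy u p = deriv φ p.2 +
        ∫ ξ in (0 : ℝ)..p.1, (f (ξ, p.2) - N (u (ξ, p.2)) * u (ξ, p.2)) := by
  have hNc := goursat_aux_cont ν N hN
  have hG : ContinuousOn (fun q => f q - N (u q) * u q) (clD X Y) :=
    hf.sub ((hNc.comp_continuousOn hu.cont).mul hu.cont)
  have hsym := goursat_aux_symm u (opD X Y) (isOpen_Ioo.prod isOpen_Ioo) hu.diffx hu.diffy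
    hu.diffxy hdiffyx hu.contxy hcontyx
  rintro ⟨x, y⟩ ⟨hx, hy⟩
  simp only at hx hy ⊢
  constructor
  · have h0 : pdx u (x, 0) = deriv ψ x := by
      refine Filter.EventuallyEq.deriv_eq ?_
      filter_upwards [isOpen_Ioo.mem_nhds hx] with t ht
      exact hu.bc1 t (Ioo_subset_Icc_self ht)
    have key := intervalIntegral.integral_eq_sub_of_hasDerivAt_of_le hy.1.le
      (f := fun t => pdx u (x, t))
      (f' := fun t => f (x, t) - N (u (x, t)) * u (x, t))
      (hxext.comp (by fun_prop) (fun t ht => ⟨hx, ht.1, ht.2.trans_lt hy.2⟩))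
      (fun t ht => by
        have hm : (x, t) ∈ opD X Y := ⟨hx, ht.1, ht.2.trans hy.2⟩
        have e : f (x, t) - N (u (x, t)) * u (x, t) = pdxy u (x, t) := by
          linarith [hu.eqn _ hm]
        rw [e]
        exact (hu.diffxy _ hm).hasDerivAt)
      (ContinuousOn.intervalIntegrable_of_Icc hy.1.le
        (hG.comp (f := fun t : ℝ => (x, t)) (by fun_prop)
          (fun t ht => ⟨Ioo_subset_Icc_self hx, ht.1, ht.2.trans hy.2.le⟩)))
    rw [key, ← h0]; ring
  · have h0 : pdy u (0, y) = deriv φ y := by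
      refine Filter.EventuallyEq.deriv_eq ?_
      filter_upwards [isOpen_Ioo.mem_nhds hy] with t ht
      exact hu.bc2 t (Ioo_subset_Icc_self ht)
    have key := intervalIntegral.integral_eq_sub_of_hasDerivAt_of_le hx.1.le
      (f := fun t => pdy u (t, y))
      (f' := fun t => f (t, y) - N (u (t, y)) * u (t, y))
      (hyext.comp (by fun_prop) (fun t ht => ⟨⟨ht.1, ht.2.trans_lt hx.2⟩, hy⟩))
      (fun t ht => by
        have hm : (t, y) ∈ opD X Y := ⟨⟨ht.1, ht.2.trans hx.2⟩, hy⟩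
        have e : f (t, y) - N (u (t, y)) * u (t, y) = pdyx u (t, y) := by
          linarith [hu.eqn _ hm, hsym _ hm]
        rw [e]
        exact (hdiffyx _ hm).hasDerivAt)
      (ContinuousOn.intervalIntegrable_of_Icc hx.1.le
        (hG.comp (f := fun t : ℝ => (t, y)) (by fun_prop)
          (fun t ht => ⟨⟨ht.1, ht.2.trans hx.2.le⟩, Ioo_subset_Icc_self hy⟩)))
    rw [key, ← h0]; ring
end
end
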